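/- arXiv:2106.09342 — 7 statements merged into one kernel-verified Lean document; each statement's English description precedes it below -/
import Mathlib

section
/- Let K be a field and let d, r ≥ 0 be integers. Write 𝔻^d_r = Spec A^d_r. For every separated K-scheme S of finite type, the contravariant functor from the category of separated finite-type K-schemes to sets sending T to Hom_K(T ×_{Spec K} 𝔻^d_r, S), and sending a K-morphism T → T' to the map Hom_K(T' ×_K 𝔻^d_r, S) → Hom_K(T ×_K 𝔻^d_r, S) given by precomposition with the induced morphism T ×_K 𝔻^d_r → T' ×_K 𝔻^d_r, is representable by a separated K-scheme of finite type (the jet scheme J^d_r S). -/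
open AlgebraicGeometry CategoryTheory Limits MvPolynomial

noncomputable section

/-- `A^d_r = K[t₁,…,t_d]/(t₁,…,t_d)^{r+1}`, the coordinate ring of the formal `d`-dimensional
disk of order `r`, so that `𝔻^d_r = Spec A^d_r`. -/
abbrev jetAlgebra (K : Type) [Field K] (d r : ℕ) : Type :=
  MvPolynomial (Fin d) K ⧸
    (Ideal.span (Set.range (X : Fin d → MvPolynomial (Fin d) K))) ^ (r + 1)

/-- The structure morphism `𝔻^d_r = Spec A^d_r ⟶ Spec K`. -/
def diskMap (K : Type) [Field K] (d r : ℕ) :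
    Spec (CommRingCat.of (jetAlgebra K d r)) ⟶ Spec (CommRingCat.of K) :=
  Spec.map (CommRingCat.ofHom (algebraMap K (jetAlgebra K d r)))

/-!
Let `D ⟶ k` have a surjective section `k ⟶ D`. For a `k`-scheme `S`, sending `T` to the set of
jets `T ×_k D ⟶ S` is a Zariski sheaf `𝒥 S`, and restricting a jet along `T ⟶ T ×_k D` gives its
centre `T ⟶ S`. The map `T ⟶ T ×_k D` is surjective, so a jet whose centre lies in an open
subscheme `U` of `S` factors through `U`; in other words `𝒥 U = 𝒥 S ×_S U`. Hence it is enough to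
represent `𝒥 U` for the members `U` of an affine open cover: the representing schemes then glue to
a scheme affine over `S`.

If `D = Spec B` with `B` a `K`-algebra having a finite basis `b`, and `U = Spec R` with `R` the
quotient of `K[X_s]` by an ideal `I`, then a jet of `U` over `C` is a homomorphism `R → C ⊗ B`. It
is determined by the coordinates in `b` of the images of the `X_s`, and these are subject only to
the equations saying that the coordinates of the images of the elements of `I` vanish. So `𝒥 U` is
represented by the spectrum of a quotient of `K[X_{s,j}]`, the Weil restriction.
-/

universe u

section LocalRepresentability

open Opposite

lemma isIso_of_bijective_on_affines {F G : Sheaf Scheme.zariskiTopology.{u} (Type u)} (f : F ⟶ G)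
    (hf : ∀ R : CommRingCat.{u}, Function.Bijective (f.hom.app (op (Spec R)))) : IsIso f := by
  rw [← Sheaf.isLocallyBijective_iff_isIso f]
  refine ⟨⟨fun {U} x y hxy => ?_⟩, ⟨fun {U} y => ?_⟩⟩
  · refine GrothendieckTopology.superset_covering _ ?_
      U.unop.affineCover.mem_grothendieckTopology
    rw [Sieve.generate_le_iff]
    rintro _ _ ⟨i⟩
    apply (hf _).1
    have hnat := fun z => ConcreteCategory.congr_hom
      (f.hom.naturality (U.unop.affineCover.f i).op) z
    exact (hnat x).trans ((congrArg (G.obj.map _) hxy).trans (hnat y).symm)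
  · refine GrothendieckTopology.superset_covering _ ?_
      U.affineCover.mem_grothendieckTopology
    rw [Sieve.generate_le_iff]
    rintro _ _ ⟨i⟩
    exact (hf _).2 _

lemma presheaf_isOpenImmersion_of_isPullback {S U Y : Scheme.{u}}
    {P : Scheme.{u}ᵒᵖ ⥤ Type u} {π : P ⟶ yoneda.obj S} {g : U ⟶ S} [hg : IsOpenImmersion g]
    {f : yoneda.obj Y ⟶ P} {q : Y ⟶ U}
    (h : IsPullback f (yoneda.map q) π (yoneda.map g)) :
    MorphismProperty.presheaf @IsOpenImmersion f := by
  have := MorphismProperty.relative_isStableUnderBaseChange (F := yoneda) @IsOpenImmersion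
  exact MorphismProperty.of_isPullback h.flip (MorphismProperty.relative_map hg)

variable {S : Scheme.{u}} {F : Sheaf Scheme.zariskiTopology.{u} (Type u)}
  {π : F.obj ⟶ yoneda.obj S} {𝒰 : Scheme.OpenCover.{u} S} {Y : 𝒰.I₀ → Scheme.{u}}
  {f : ∀ i, yoneda.obj (Y i) ⟶ F.obj} {q : ∀ i, Y i ⟶ 𝒰.X i}

lemma isLocallySurjective_sigma_desc_of_isPullback
    (h : ∀ i, IsPullback (f i) (yoneda.map (q i)) π (yoneda.map (𝒰.f i))) :
    Presheaf.IsLocallySurjective Scheme.zariskiTopology (Limits.Sigma.desc f) := by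
  refine ⟨fun {T} x => ?_⟩
  let g : T ⟶ S := π.app (op T) x
  let ι (i : 𝒰.I₀) : yoneda.obj (Y i) ⟶ ∐ fun j => yoneda.obj (Y j) :=
    Limits.Sigma.ι (fun j => yoneda.obj (Y j)) i
  refine GrothendieckTopology.superset_covering _ ?_
    (Scheme.Cover.mem_grothendieckTopology (𝒰.pullback₁ g))
  rw [Sieve.generate_le_iff]
  rintro _ _ ⟨i⟩
  let V := pullback g (𝒰.f i)
  have hV : π.app (op V) (F.obj.map (pullback.fst g (𝒰.f i)).op x) =
      (yoneda.map (𝒰.f i)).app (op V) (pullback.snd g (𝒰.f i)) :=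
    (ConcreteCategory.congr_hom (π.naturality (pullback.fst g (𝒰.f i)).op) x).trans
      (pullback.condition : pullback.fst g (𝒰.f i) ≫ g = _)
  obtain ⟨y, hy, -⟩ := Types.exists_of_isPullback
    ((h i).map ((evaluation _ _).obj (op V))) _ _ hV
  refine ⟨(ι i).app (op V) y, Eq.trans ?_ hy⟩
  exact ConcreteCategory.congr_hom (NatTrans.congr_app (Limits.Sigma.ι_desc f i) (op V)) y

theorem exists_scheme_of_isPullback
    (h : ∀ i, IsPullback (f i) (yoneda.map (q i)) π (yoneda.map (𝒰.f i))) :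
    ∃ (J : Scheme.{u}) (ρ : J ⟶ S) (φ : yoneda.obj J ≅ F.obj),
      φ.hom ≫ π = yoneda.map ρ ∧ ∀ i, ∃ f' : Y i ⟶ J, IsPullback f' (q i) ρ (𝒰.f i) := by
  have hf (i) := presheaf_isOpenImmersion_of_isPullback (h i)
  have := isLocallySurjective_sigma_desc_of_isPullback h
  let φ := (Scheme.LocalRepresentability.representableBy hf).toIso
  refine ⟨_, yoneda.preimage (φ.hom ≫ π), φ, (yoneda.map_preimage _).symm, fun i =>
    ⟨yoneda.preimage (f i ≫ φ.inv), .of_map_of_faithful yoneda ?_⟩⟩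
  simp only [yoneda.map_preimage]
  exact .of_iso (h i) (.refl _) φ.symm (.refl _) (.refl _) (by simp) (by simp) (by simp) (by simp)

lemma of_forall_isPullback_openCover {P : MorphismProperty Scheme.{u}} [IsZariskiLocalAtTarget P]
    {J : Scheme.{u}} {ρ : J ⟶ S} (h : ∀ i, ∃ f' : Y i ⟶ J, IsPullback f' (q i) ρ (𝒰.f i))
    (hq : ∀ i, P (q i)) : P ρ := by
  refine IsZariskiLocalAtTarget.of_openCover 𝒰 fun i => ?_
  obtain ⟨f', hf'⟩ := h i
  have hpullback : hf'.isoPullback.inv ≫ q i = 𝒰.pullbackHom ρ i := hf'.isoPullback_inv_snd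
  have : IsIso hf'.isoPullback.symm.hom := inferInstance
  rw [← hpullback]
  exact MorphismProperty.RespectsIso.precomp P hf'.isoPullback.symm.hom _ (hq i)

end LocalRepresentability
section Jets

variable {k D S T T' W : Scheme.{u}} {p : D ⟶ k} {s : S ⟶ k}

/-- A jet on `S` parametrised by `T`: a `k`-structure on `T` together with a `k`-morphism
`T ×_k D ⟶ S`. Letting the structure morphism of `T` vary makes jets a presheaf on all schemes,
so that the Zariski gluing criterion for representability applies. -/
structure Jet (p : D ⟶ k) (s : S ⟶ k) (T : Scheme.{u}) : Type u where
  base : T ⟶ k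
  hom : pullback base p ⟶ S
  w : hom ≫ s = pullback.fst base p ≫ base

namespace Jet

attribute [local simp] pullback.lift_fst pullback.lift_fst_assoc pullback.lift_snd
  pullback.lift_snd_assoc

/-- The value of the jet `x : T ×_k D ⟶ S` at the `W`-valued point `(a, b)` of `T ×_k D`. -/
def eval (x : Jet p s T) (a : W ⟶ T) (b : W ⟶ D) (h : a ≫ x.base = b ≫ p) : W ⟶ S :=
  pullback.lift a b h ≫ x.hom

lemma eval_congr {x y : Jet p s T} (hxy : x = y) (a : W ⟶ T) (b : W ⟶ D)
    (hx : a ≫ x.base = b ≫ p) (hy : a ≫ y.base = b ≫ p) : x.eval a b hx = y.eval a b hy := by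
  subst hxy
  rfl

lemma comp_eval (x : Jet p s T) (c : T' ⟶ W) (a : W ⟶ T) (b : W ⟶ D)
    (h : a ≫ x.base = b ≫ p) :
    c ≫ x.eval a b h = x.eval (c ≫ a) (c ≫ b) (by simp [h]) := by
  rw [eval, ← Category.assoc, eval]
  congr 1
  apply pullback.hom_ext <;> simp

lemma eval_comp_structure (x : Jet p s T) (a : W ⟶ T) (b : W ⟶ D) (h : a ≫ x.base = b ≫ p) :
    x.eval a b h ≫ s = a ≫ x.base := by
  simp [eval, x.w]

lemma eval_fst_snd (x : Jet p s T) :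
    x.eval (pullback.fst x.base p) (pullback.snd x.base p) pullback.condition = x.hom := by
  rw [eval, pullback.lift_fst_snd, Category.id_comp]

lemma ext_of_eval {x y : Jet p s T} (hbase : x.base = y.base)
    (heval : ∀ ⦃W : Scheme.{u}⦄ (a : W ⟶ T) (b : W ⟶ D) (hx : a ≫ x.base = b ≫ p)
      (hy : a ≫ y.base = b ≫ p), x.eval a b hx = y.eval a b hy) : x = y := by
  obtain ⟨t, f, hf⟩ := x
  obtain ⟨t', g, hg⟩ := y
  obtain rfl : t = t' := hbase
  obtain rfl : f = g := by
    simpa [eval] using heval _ _ pullback.condition pullback.condition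
  rfl

/-- The restriction of a jet along a morphism of parameter schemes. -/
@[simps base]
def pull (f : T' ⟶ T) (x : Jet p s T) : Jet p s T' where
  base := f ≫ x.base
  hom := x.eval (pullback.fst _ _ ≫ f) (pullback.snd _ _) (by simp [pullback.condition])
  w := by simp [eval_comp_structure]

@[simp]
lemma eval_pull (f : T' ⟶ T) (x : Jet p s T) (a : W ⟶ T') (b : W ⟶ D)
    (h : a ≫ (x.pull f).base = b ≫ p) :
    (x.pull f).eval a b h = x.eval (a ≫ f) b (by simpa using h) := by
  have h' : a ≫ f ≫ x.base = b ≫ p := by simpa using h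
  have hcomp := x.comp_eval (pullback.lift a b h') (pullback.fst _ _ ≫ f) (pullback.snd _ _)
    (by simp [pullback.condition])
  simp only [pullback.lift_fst_assoc, pullback.lift_snd] at hcomp
  exact hcomp

lemma pull_id (x : Jet p s T) : x.pull (𝟙 T) = x :=
  ext_of_eval (by simp) fun _ _ _ _ _ => by simp

lemma pull_comp (g : W ⟶ T') (f : T' ⟶ T) (x : Jet p s T) :
    x.pull (g ≫ f) = (x.pull f).pull g :=
  ext_of_eval (by simp) fun _ _ _ _ _ => by simp

/-- The composition of a jet with a morphism of target schemes. -/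
@[simps base]
def push {U : Scheme.{u}} (g : U ⟶ S) (x : Jet p (g ≫ s) T) : Jet p s T where
  base := x.base
  hom := x.hom ≫ g
  w := by simp [x.w]

@[simp]
lemma eval_push {U : Scheme.{u}} (g : U ⟶ S) (x : Jet p (g ≫ s) T) (a : W ⟶ T) (b : W ⟶ D)
    (h : a ≫ (x.push g).base = b ≫ p) : (x.push g).eval a b h = x.eval a b (by simpa using h) ≫ g :=
  (Category.assoc _ _ _).symm

lemma push_pull {U : Scheme.{u}} (g : U ⟶ S) (f : T' ⟶ T) (x : Jet p (g ≫ s) T) :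
    (x.pull f).push g = (x.push g).pull f :=
  ext_of_eval rfl fun _ _ _ _ _ => by simp

variable (s) in
/-- Jets with prescribed `k`-structure `t` are the `k`-morphisms `T ×_k D ⟶ S`. -/
def fiberEquiv (t : T ⟶ k) :
    {x : Jet p s T // x.base = t} ≃ {h : pullback t p ⟶ S // h ≫ s = pullback.fst t p ≫ t} where
  toFun x := ⟨x.1.eval (pullback.fst t p) (pullback.snd t p) (by rw [x.2, pullback.condition]),
    by rw [eval_comp_structure, x.2]⟩
  invFun h := ⟨⟨t, h.1, h.2⟩, rfl⟩
  left_inv := by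
    rintro ⟨x, rfl⟩
    simp only [eval_fst_snd]
  right_inv h := Subtype.ext (eval_fst_snd ⟨t, h.1, h.2⟩)

lemma fiberEquiv_pull (f : T' ⟶ T) {t : T ⟶ k} {t' : T' ⟶ k} (hf : f ≫ t = t') (x : Jet p s T)
    (hx : x.base = t) :
    (fiberEquiv s t' ⟨x.pull f, by simp [hx, hf]⟩).1 =
      pullback.map t' p t p f (𝟙 D) (𝟙 k) (by simp [hf]) (by simp) ≫
        (fiberEquiv s t ⟨x, hx⟩).1 := by
  simp [fiberEquiv, comp_eval]

lemma eval_eq_of_pull_eq {T₁ T₂ : Scheme.{u}} {f : T ⟶ T₁} {g : T ⟶ T₂} {x : Jet p s T₁}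
    {y : Jet p s T₂} (hxy : x.pull f = y.pull g) (c : W ⟶ T) (b : W ⟶ D)
    (hx : (c ≫ f) ≫ x.base = b ≫ p) (hy : (c ≫ g) ≫ y.base = b ≫ p) :
    x.eval (c ≫ f) b hx = y.eval (c ≫ g) b hy := by
  rw [← eval_pull f x c b (by simpa using hx), ← eval_pull g y c b (by simpa using hy)]
  exact eval_congr hxy ..

lemma eval_eq_of_pull_pullback_eq {T₁ T₂ : Scheme.{u}} {f : T₁ ⟶ T} {g : T₂ ⟶ T} {x : Jet p s T₁}
    {y : Jet p s T₂} (hxy : x.pull (pullback.fst f g) = y.pull (pullback.snd f g))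
    {a₁ : W ⟶ T₁} {a₂ : W ⟶ T₂} (ha : a₁ ≫ f = a₂ ≫ g) (b : W ⟶ D)
    (hx : a₁ ≫ x.base = b ≫ p) (hy : a₂ ≫ y.base = b ≫ p) :
    x.eval a₁ b hx = y.eval a₂ b hy := by
  simpa using eval_eq_of_pull_eq hxy (pullback.lift a₁ a₂ ha) b (by simpa using hx)
    (by simpa using hy)

lemma eq_of_cover (𝒰 : T.OpenCover) {x y : Jet p s T}
    (h : ∀ i, x.pull (𝒰.f i) = y.pull (𝒰.f i)) : x = y := by
  have hbase : x.base = y.base := Scheme.Cover.hom_ext 𝒰 _ _ fun i => congrArg base (h i)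
  refine ext_of_eval hbase fun W a b hx hy =>
    Scheme.Cover.hom_ext (𝒰.pullback₁ a) _ _ fun i => ?_
  change pullback.fst a (𝒰.f i) ≫ _ = pullback.fst a (𝒰.f i) ≫ _
  simp only [comp_eval, pullback.condition]
  exact eval_eq_of_pull_eq (h i) ..

lemma exists_glue_of_base (𝒰 : T.OpenCover) (t : T ⟶ k) (x : ∀ i, Jet p s (𝒰.X i))
    (hbase : ∀ i, (x i).base = 𝒰.f i ≫ t)
    (hx : ∀ i j, (x i).pull (pullback.fst (𝒰.f i) (𝒰.f j)) =
      (x j).pull (pullback.snd (𝒰.f i) (𝒰.f j))) :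
    ∃ y : Jet p s T, y.base = t ∧ ∀ i, y.pull (𝒰.f i) = x i := by
  let 𝒱 : (pullback t p).OpenCover := 𝒰.pullback₁ (pullback.fst t p)
  let ι (i : 𝒰.I₀) : pullback (pullback.fst t p) (𝒰.f i) ⟶ pullback t p := pullback.fst _ _
  let q (i : 𝒰.I₀) : pullback (pullback.fst t p) (𝒰.f i) ⟶ 𝒰.X i := pullback.snd _ _
  have hιq (i) : ι i ≫ pullback.fst t p = q i ≫ 𝒰.f i := pullback.condition
  let g (i : 𝒰.I₀) : pullback (pullback.fst t p) (𝒰.f i) ⟶ S :=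
    (x i).eval (q i) (ι i ≫ pullback.snd t p)
      (by rw [hbase, ← reassoc_of% hιq, pullback.condition, Category.assoc])
  have hg (i j) : pullback.fst (ι i) (ι j) ≫ g i = pullback.snd (ι i) (ι j) ≫ g j := by
    simp only [g, comp_eval, pullback.condition_assoc]
    refine eval_eq_of_pull_pullback_eq (hx i j) ?_ ..
    simp only [Category.assoc, ← hιq, pullback.condition_assoc]
  let h : pullback t p ⟶ S := 𝒱.glueMorphisms g hg
  have hh (i) : ι i ≫ h = g i := Scheme.Cover.ι_glueMorphisms 𝒱 g hg i
  have hw : h ≫ s = pullback.fst t p ≫ t := by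
    refine Scheme.Cover.hom_ext 𝒱 _ _ fun (i : 𝒰.I₀) => ?_
    change ι i ≫ _ = ι i ≫ _
    rw [reassoc_of% hh i, eval_comp_structure, hbase, reassoc_of% hιq i]
  refine ⟨⟨t, h, hw⟩, rfl, fun i => ext_of_eval (hbase i).symm fun W a b hy hx => ?_⟩
  have hab : (a ≫ 𝒰.f i) ≫ t = b ≫ p := by simpa using hy
  have hlift := pullback.lift (pullback.lift (a ≫ 𝒰.f i) b hab) a
    (pullback.lift_fst ..) ≫= hh i
  simp only [g, ι, q, comp_eval, pullback.lift_fst_assoc, pullback.lift_snd] at hlift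
  rw [eval_pull]
  exact hlift

lemma exists_glue (𝒰 : T.OpenCover) (x : ∀ i, Jet p s (𝒰.X i))
    (hx : ∀ i j, (x i).pull (pullback.fst (𝒰.f i) (𝒰.f j)) =
      (x j).pull (pullback.snd (𝒰.f i) (𝒰.f j))) :
    ∃ y : Jet p s T, ∀ i, y.pull (𝒰.f i) = x i := by
  let t : T ⟶ k := 𝒰.glueMorphisms (fun i => (x i).base) fun i j => congrArg base (hx i j)
  have ht (i) : 𝒰.f i ≫ t = (x i).base := 𝒰.ι_glueMorphisms _ _ i
  obtain ⟨y, -, hy⟩ := exists_glue_of_base 𝒰 t x (fun i => (ht i).symm) hx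
  exact ⟨y, hy⟩

end Jet

end Jets

section JetSheaf

open Opposite

variable {k D S U T T' : Scheme.{u}} (p : D ⟶ k) (s : S ⟶ k)

/-- The presheaf sending `T` to the jets on `S` parametrised by `T`. -/
def jetPresheaf : Scheme.{u}ᵒᵖ ⥤ Type u where
  obj T := Jet p s T.unop
  map f := TypeCat.ofHom (Jet.pull f.unop)
  map_id _ := by ext x; exact x.pull_id
  map_comp f g := by ext x; exact x.pull_comp g.unop f.unop

lemma isSheaf_jetPresheaf : Presheaf.IsSheaf Scheme.zariskiTopology (jetPresheaf p s) := by
  rw [isSheaf_iff_isSheaf_of_type,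
    Precoverage.isSheaf_toGrothendieck_iff_of_isStableUnderBaseChange]
  rintro T R hR
  obtain ⟨(𝒰 : T.OpenCover), rfl⟩ := Scheme.exists_cover_of_mem_pretopology hR
  refine (Presieve.isSheafFor_arrows_iff_pullbacks (jetPresheaf p s) 𝒰.f).mpr fun x hx => ?_
  obtain ⟨y, hy⟩ := Jet.exists_glue 𝒰 x hx
  exact ⟨y, hy, fun z hz => Jet.eq_of_cover 𝒰 fun i => (hz i).trans (hy i).symm⟩

variable {s} in
/-- The morphism of jet presheaves induced by a morphism of target schemes. -/
def jetPresheafMap (g : U ⟶ S) : jetPresheaf p (g ≫ s) ⟶ jetPresheaf p s where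
  app _ := TypeCat.ofHom (Jet.push g)
  naturality _ _ f := by ext x; exact x.push_pull g f.unop

variable {p s} (σ : SplitEpi p)

/-- The centre of a jet `x : T ×_k D ⟶ S`: its restriction to the copy of `T` in `T ×_k D` given
by a section of `D ⟶ k`. -/
def Jet.center (x : Jet p s T) : T ⟶ S :=
  x.eval (𝟙 T) (x.base ≫ σ.section_) (by simp)

lemma Jet.center_pull (f : T' ⟶ T) (x : Jet p s T) :
    (x.pull f).center σ = f ≫ x.center σ := by
  simp [center, comp_eval]

lemma Jet.center_comp_structure (x : Jet p s T) : x.center σ ≫ s = x.base := by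
  simp [center, eval_comp_structure]

lemma Jet.center_push (g : U ⟶ S) (x : Jet p (g ≫ s) T) :
    (x.push g).center σ = x.center σ ≫ g := by
  simp [center]

variable (s) in
/-- The projection from the presheaf of jets to `S`, sending a jet to its centre. -/
def jetPresheafCenter : jetPresheaf p s ⟶ yoneda.obj S where
  app _ := TypeCat.ofHom (Jet.center σ)
  naturality _ _ f := by ext x; exact x.center_pull σ f.unop

variable [Surjective σ.section_]

lemma Jet.range_hom_subset (x : Jet p s T) : Set.range x.hom ⊆ Set.range (x.center σ) := by
  let i : T ⟶ pullback x.base p := pullback.lift (𝟙 T) (x.base ≫ σ.section_) (by simp)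
  have hi : IsPullback i x.base (pullback.snd x.base p) σ.section_ := by
    refine .of_right ?_ (pullback.lift_snd ..) (IsPullback.of_hasPullback x.base p)
    rw [pullback.lift_fst, σ.id]
    exact .of_horiz_isIso ⟨by simp⟩
  have hsurj : Surjective i :=
    MorphismProperty.of_isPullback (P := @Surjective) hi.flip inferInstance
  rintro _ ⟨a, rfl⟩
  obtain ⟨b, rfl⟩ := hsurj.surj a
  exact ⟨b, by simp [center, eval, i]⟩

lemma Jet.exists_push_eq (g : U ⟶ S) [IsOpenImmersion g] (x : Jet p s T) (y : T ⟶ U)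
    (hy : y ≫ g = x.center σ) : ∃ x' : Jet p (g ≫ s) T, x'.push g = x := by
  have hrange : Set.range x.hom ⊆ Set.range g := by
    refine (x.range_hom_subset σ).trans ?_
    rw [← hy]
    rintro _ ⟨a, rfl⟩
    exact ⟨y a, (Scheme.Hom.comp_apply y g a).symm⟩
  let x' : Jet p (g ≫ s) T :=
    ⟨x.base, IsOpenImmersion.lift g x.hom hrange, by rw [IsOpenImmersion.lift_fac_assoc, x.w]⟩
  refine ⟨x', ext_of_eval rfl fun _ a b _ _ => ?_⟩
  rw [eval_push, eval, Category.assoc, IsOpenImmersion.lift_fac, eval]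

lemma Jet.push_injective (g : U ⟶ S) [Mono g] :
    Function.Injective (Jet.push (p := p) (s := s) (T := T) g) := by
  intro x y hxy
  have hbase : x.base = y.base := congrArg Jet.base (a₁ := x.push g) hxy
  refine ext_of_eval hbase fun W a b hx hy => ?_
  rw [← cancel_mono g, ← eval_push g x a b hx, ← eval_push g y a b hy]
  exact eval_congr hxy ..

lemma isPullback_jetPresheafMap (g : U ⟶ S) [IsOpenImmersion g] :
    IsPullback (jetPresheafMap p g) (jetPresheafCenter (g ≫ s) σ) (jetPresheafCenter s σ)
      (yoneda.map g) := by
  refine .of_forall_isPullback_app fun ⟨T⟩ => (Types.isPullback_iff ..).2 ⟨?_, ?_, ?_⟩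
  · ext x
    exact x.center_push σ g
  · rintro x y ⟨hxy, -⟩
    exact Jet.push_injective g hxy
  · intro (x : Jet p s T) (y : T ⟶ U) (hxy : x.center σ = y ≫ g)
    obtain ⟨x', rfl⟩ := x.exists_push_eq σ g y hxy.symm
    refine ⟨x', rfl, ?_⟩
    rw [Jet.center_push, cancel_mono] at hxy
    exact hxy

end JetSheaf
section TensorCoordinates

open TensorProduct

variable {K A A' B P W ι : Type*} [CommRing K] [CommRing A] [Algebra K A] [CommRing A']
  [Algebra K A'] [CommRing B] [Algebra K B] [CommRing P] [Algebra K P] [CommRing W] [Algebra K W]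

lemma basis_repr_map (b : Module.Basis ι K B) (ψ : A →ₐ[K] A') (x : A ⊗[K] B) (j : ι) :
    (Algebra.TensorProduct.basis A' b).repr (Algebra.TensorProduct.map ψ (AlgHom.id K B) x) j =
      ψ ((Algebra.TensorProduct.basis A b).repr x j) := by
  induction x with
  | zero => simp
  | tmul a y => simp [Algebra.TensorProduct.basis_repr_tmul]
  | add x y hx hy => simp only [map_add, Finsupp.add_apply, hx, hy]

/-- The homomorphism out of `K[X_s]` sending `X_s` to `∑ j, X_{s,j} ⊗ b_j`. -/
def genericHom [Fintype ι] (b : Module.Basis ι K B) (σ : Type*) :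
    MvPolynomial σ K →ₐ[K] MvPolynomial (σ × ι) K ⊗[K] B :=
  aeval fun s => ∑ j, X (s, j) ⊗ₜ[K] b j

lemma basis_repr_genericHom_X [Fintype ι] (b : Module.Basis ι K B) {σ : Type*} (s : σ) (j : ι) :
    (Algebra.TensorProduct.basis (MvPolynomial (σ × ι) K) b).repr (genericHom b σ (X s)) j =
      X (s, j) := by
  classical
  simp [genericHom, Algebra.TensorProduct.basis_repr_tmul, Finsupp.single_apply]

lemma basis_repr_map_genericHom_X [Fintype ι] (b : Module.Basis ι K B) {σ : Type*}
    (ψ : MvPolynomial (σ × ι) K →ₐ[K] A) (s : σ) (j : ι) :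
    (Algebra.TensorProduct.basis A b).repr
      (Algebra.TensorProduct.map ψ (AlgHom.id K B) (genericHom b σ (X s))) j = ψ (X (s, j)) := by
  rw [basis_repr_map, basis_repr_genericHom_X]

/-- The ideal generated by the coordinates, in the basis `b`, of the elements `u f` with `f ∈ J`. -/
def coordIdeal (b : Module.Basis ι K B) (u : P →ₐ[K] W ⊗[K] B) (J : Ideal P) : Ideal W :=
  Ideal.span {c | ∃ f ∈ J, ∃ j, (Algebra.TensorProduct.basis W b).repr (u f) j = c}

lemma coordIdeal_le_ker_iff (b : Module.Basis ι K B) (u : P →ₐ[K] W ⊗[K] B) (J : Ideal P)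
    (ψ : W →ₐ[K] A) :
    coordIdeal b u J ≤ RingHom.ker ψ ↔
      J ≤ RingHom.ker ((Algebra.TensorProduct.map ψ (AlgHom.id K B)).comp u) := by
  have hcoord (f : P) : (Algebra.TensorProduct.map ψ (AlgHom.id K B)).comp u f = 0 ↔
      ∀ j, ψ ((Algebra.TensorProduct.basis W b).repr (u f) j) = 0 := by
    simp_rw [← basis_repr_map, AlgHom.comp_apply]
    rw [← (Algebra.TensorProduct.basis A b).repr.map_eq_zero_iff, Finsupp.ext_iff]
    rfl
  rw [coordIdeal, Ideal.span_le]
  constructor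
  · exact fun h f hf => (hcoord f).2 fun j => h ⟨f, hf, j, rfl⟩
  · rintro h _ ⟨f, hf, j, rfl⟩
    exact (hcoord f).1 (h hf) j

end TensorCoordinates

section WeilRestriction

open TensorProduct

variable {K B P R W ι : Type u} [CommRing K] [CommRing B] [Algebra K B] [CommRing P] [Algebra K P]
  [CommRing R] [Algebra K R] [CommRing W] [Algebra K W]

/-- `W`, with the universal homomorphism `u`, is the Weil restriction along `K → B` of the
`B`-algebra `R ⊗ B`: homomorphisms `W → C` correspond to homomorphisms `R → C ⊗ B`. -/
def IsWeilRestriction (u : R →ₐ[K] W ⊗[K] B) : Prop :=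
  ∀ (C : Type u) [CommRing C] [Algebra K C], Function.Bijective fun ψ : W →ₐ[K] C =>
    (Algebra.TensorProduct.map ψ (AlgHom.id K B)).comp u

lemma isWeilRestriction_genericHom [Fintype ι] (b : Module.Basis ι K B) (σ : Type u) :
    IsWeilRestriction (genericHom b σ) := by
  refine fun C _ _ => ⟨fun ψ ψ' h => ?_, fun φ => ?_⟩
  · ext ⟨s, j⟩
    replace h : (Algebra.TensorProduct.map ψ (AlgHom.id K B)).comp (genericHom b σ) =
      (Algebra.TensorProduct.map ψ' (AlgHom.id K B)).comp (genericHom b σ) := h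
    rw [← basis_repr_map_genericHom_X b ψ, ← basis_repr_map_genericHom_X b ψ',
      ← AlgHom.comp_apply, h, AlgHom.comp_apply]
  · let ψ : MvPolynomial (σ × ι) K →ₐ[K] C :=
      aeval fun x => (Algebra.TensorProduct.basis C b).repr (φ (X x.1)) x.2
    refine ⟨ψ, MvPolynomial.algHom_ext fun s =>
      (Algebra.TensorProduct.basis C b).ext_elem fun j => ?_⟩
    rw [AlgHom.comp_apply, basis_repr_map_genericHom_X, aeval_X]

lemma IsWeilRestriction.exists_of_surjective (b : Module.Basis ι K B) {u : P →ₐ[K] W ⊗[K] B}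
    (hu : IsWeilRestriction u) {π : P →ₐ[K] R} (hπ : Function.Surjective π) :
    ∃ v : R →ₐ[K] (W ⧸ coordIdeal b u (RingHom.ker π)) ⊗[K] B, IsWeilRestriction v := by
  let I := coordIdeal b u (RingHom.ker π)
  let q : W →ₐ[K] W ⧸ I := Ideal.Quotient.mkₐ K I
  have hq : Function.Surjective q := Ideal.Quotient.mkₐ_surjective K I
  have hker : RingHom.ker π ≤
      RingHom.ker ((Algebra.TensorProduct.map q (AlgHom.id K B)).comp u) :=
    (coordIdeal_le_ker_iff ..).1 (Ideal.Quotient.mkₐ_ker K I).ge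
  let v : R →ₐ[K] (W ⧸ I) ⊗[K] B := π.liftOfSurjective hπ _ hker
  have hvπ : v.comp π = (Algebra.TensorProduct.map q (AlgHom.id K B)).comp u :=
    AlgHom.liftOfSurjective_comp ..
  have hv {C : Type u} [CommRing C] [Algebra K C] (ψ : W ⧸ I →ₐ[K] C) :
      ((Algebra.TensorProduct.map ψ (AlgHom.id K B)).comp v).comp π =
        (Algebra.TensorProduct.map (ψ.comp q) (AlgHom.id K B)).comp u := by
    rw [AlgHom.comp_assoc, hvπ, ← AlgHom.comp_assoc, ← Algebra.TensorProduct.map_comp,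
      AlgHom.comp_id]
  refine ⟨v, fun C _ _ => ⟨fun ψ ψ' h => ?_, fun φ => ?_⟩⟩
  · refine (AlgHom.cancel_right hq).1 ((hu C).1 ?_)
    simp only [← hv]
    exact congrArg (fun χ : R →ₐ[K] C ⊗[K] B => χ.comp π) h
  · obtain ⟨ψ, hψ : (Algebra.TensorProduct.map ψ (AlgHom.id K B)).comp u = φ.comp π⟩ :=
      (hu C).2 (φ.comp π)
    have hI : I ≤ RingHom.ker ψ := by
      rw [coordIdeal_le_ker_iff, hψ]
      exact fun f hf => by simp [RingHom.mem_ker.1 hf]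
    have hψq : (Ideal.Quotient.liftₐ I ψ hI).comp q = ψ := Ideal.Quotient.liftₐ_comp I ψ hI
    exact ⟨Ideal.Quotient.liftₐ I ψ hI, (AlgHom.cancel_right hπ).1 (by rw [hv, hψq, hψ])⟩

theorem exists_isWeilRestriction (K R B : Type u) [CommRing K] [CommRing R] [Algebra K R]
    [CommRing B] [Algebra K B] [Module.Free K B] [Module.Finite K B] :
    ∃ (W : Type u) (_ : CommRing W) (_ : Algebra K W) (u : R →ₐ[K] W ⊗[K] B),
      IsWeilRestriction u ∧ (Algebra.FiniteType K R → Algebra.FiniteType K W) := by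
  let b := Module.Free.chooseBasis K B
  obtain ⟨σ, π, hπ, hσ⟩ : ∃ (σ : Type u) (π : MvPolynomial σ K →ₐ[K] R),
      Function.Surjective π ∧ (Algebra.FiniteType K R → Finite σ) := by
    by_cases hR : Algebra.FiniteType K R
    · obtain ⟨σ, _, π, hπ⟩ := Algebra.FiniteType.iff_quotient_mvPolynomial'.1 hR
      exact ⟨σ, π, hπ, fun _ => inferInstance⟩
    · exact ⟨R, aeval id, fun x => ⟨X x, aeval_X id x⟩, fun h => (hR h).elim⟩
  obtain ⟨v, hv⟩ := (isWeilRestriction_genericHom b σ).exists_of_surjective b hπ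
  refine ⟨_, inferInstance, inferInstance, v, hv, fun hR => ?_⟩
  have := hσ hR
  infer_instance

end WeilRestriction
section AffineJets

open TensorProduct Opposite

/-- The structure morphism of the spectrum of a `K`-algebra. -/
abbrev specStructure (K A : Type u) [CommRing K] [CommRing A] [Algebra K A] :
    Spec (.of A) ⟶ Spec (.of K) :=
  Spec.map (CommRingCat.ofHom (algebraMap K A))

/-- The morphism of spectra induced by a homomorphism of `K`-algebras. -/
def specMap {K A A' : Type u} [CommRing K] [CommRing A] [Algebra K A] [CommRing A'] [Algebra K A']
    (φ : A →ₐ[K] A') : Spec (.of A') ⟶ Spec (.of A) :=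
  Spec.map (CommRingCat.ofHom φ.toRingHom)

variable {K A A' A'' C B R W : Type u} [CommRing K] [CommRing A] [Algebra K A] [CommRing A']
  [Algebra K A'] [CommRing A''] [Algebra K A''] [CommRing B] [Algebra K B] [CommRing C]
  [Algebra K C] [CommRing R] [Algebra K R] [CommRing W] [Algebra K W]

lemma specMap_comp_specMap (φ : A →ₐ[K] A') (ψ : A' →ₐ[K] A'') :
    specMap ψ ≫ specMap φ = specMap (ψ.comp φ) :=
  (Spec.map_comp _ _).symm

lemma specMap_comp_specStructure (φ : A →ₐ[K] A') :
    specMap φ ≫ specStructure K A = specStructure K A' := by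
  rw [specMap, ← Spec.map_comp, ← CommRingCat.ofHom_comp]
  congr 2
  exact φ.comp_algebraMap

lemma specMap_injective : Function.Injective (specMap : (A →ₐ[K] A') → _) := fun _ _ h =>
  AlgHom.ext fun a => ConcreteCategory.congr_hom (Spec.map_injective h) a

lemma exists_specMap_eq (g : Spec (.of A') ⟶ Spec (.of A))
    (hg : g ≫ specStructure K A = specStructure K A') : ∃ φ : A →ₐ[K] A', specMap φ = g := by
  obtain ⟨f, rfl⟩ := Spec.map_surjective g
  rw [← Spec.map_comp] at hg
  exact ⟨⟨f.hom, fun a => ConcreteCategory.congr_hom (Spec.map_injective hg) a⟩, rfl⟩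

lemma surjective_specMap_of_ker_le_nilradical {φ : A →ₐ[K] A'} (hφ : Function.Surjective φ)
    (hker : RingHom.ker φ ≤ nilradical A) : Surjective (specMap φ) := by
  refine ⟨Set.range_eq_univ.1 ?_⟩
  refine (range_comap_of_surjective A' φ.toRingHom hφ).trans ?_
  exact (PrimeSpectrum.zeroLocus_eq_univ_iff _).2 hker

/-- The section of `Spec B ⟶ Spec K` given by an augmentation of `B`. -/
def augmentationSplitEpi (ε : B →ₐ[K] K) : SplitEpi (specStructure K B) where
  section_ := specMap ε
  id := (specMap_comp_specStructure ε).trans (Spec.map_id _)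

lemma augmentation_surjective (ε : B →ₐ[K] K) : Function.Surjective ε := fun a =>
  ⟨algebraMap K B a, ε.commutes a⟩

variable (K C B) in
/-- The projection `Spec (C ⊗ B) ⟶ Spec C`. -/
def tensorFst : Spec (.of (C ⊗[K] B)) ⟶ Spec (.of C) :=
  specMap (Algebra.TensorProduct.includeLeft : C →ₐ[K] C ⊗[K] B)

variable (K C B) in
/-- The projection `Spec (C ⊗ B) ⟶ Spec B`. -/
def tensorSnd : Spec (.of (C ⊗[K] B)) ⟶ Spec (.of B) :=
  specMap (Algebra.TensorProduct.includeRight : B →ₐ[K] C ⊗[K] B)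

lemma tensorFst_comp_specStructure :
    tensorFst K C B ≫ specStructure K C = tensorSnd K C B ≫ specStructure K B :=
  (specMap_comp_specStructure _).trans (specMap_comp_specStructure _).symm

lemma specMap_map_comp_tensorFst (ψ : W →ₐ[K] C) :
    specMap (Algebra.TensorProduct.map ψ (AlgHom.id K B)) ≫ tensorFst K W B =
      tensorFst K C B ≫ specMap ψ := by
  rw [tensorFst, tensorFst, specMap_comp_specMap, specMap_comp_specMap,
    Algebra.TensorProduct.map_comp_includeLeft]

lemma specMap_map_comp_tensorSnd (ψ : W →ₐ[K] C) :
    specMap (Algebra.TensorProduct.map ψ (AlgHom.id K B)) ≫ tensorSnd K W B =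
      tensorSnd K C B := by
  rw [tensorSnd, tensorSnd, specMap_comp_specMap, Algebra.TensorProduct.map_comp_includeRight,
    AlgHom.comp_id]

lemma exists_comp_tensorFst_tensorSnd {T : Scheme.{u}} (a : T ⟶ Spec (.of C))
    (b : T ⟶ Spec (.of B)) (h : a ≫ specStructure K C = b ≫ specStructure K B) :
    ∃ c : T ⟶ Spec (.of (C ⊗[K] B)),
      c ≫ tensorFst K C B = a ∧
      c ≫ tensorSnd K C B = b := by
  refine ⟨pullback.lift a b h ≫ (pullbackSpecIso K C B).hom, ?_, ?_⟩
  · refine (Category.assoc ..).trans (.trans ?_ (pullback.lift_fst a b h))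
    exact congrArg (pullback.lift a b h ≫ ·) (pullbackSpecIso_hom_fst K C B)
  · refine (Category.assoc ..).trans (.trans ?_ (pullback.lift_snd a b h))
    exact congrArg (pullback.lift a b h ≫ ·) (pullbackSpecIso_hom_snd K C B)

lemma lift_comp_pullbackSpecIso_hom {T : Scheme.{u}} (c : T ⟶ Spec (.of (C ⊗[K] B)))
    {a : T ⟶ Spec (.of C)} {b : T ⟶ Spec (.of B)} (ha : c ≫ tensorFst K C B = a)
    (hb : c ≫ tensorSnd K C B = b) (h : a ≫ specStructure K C = b ≫ specStructure K B) :
    pullback.lift a b h ≫ (pullbackSpecIso K C B).hom = c := by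
  rw [← Iso.eq_comp_inv]
  apply pullback.hom_ext
  · rw [pullback.lift_fst, Category.assoc, pullbackSpecIso_inv_fst, ← ha]
    rfl
  · rw [pullback.lift_snd, Category.assoc, pullbackSpecIso_inv_snd, ← hb]
    rfl

/-- The jet parametrised by `Spec C` attached to a homomorphism `R → C ⊗ B`. -/
def Jet.ofAlgHom (φ : R →ₐ[K] C ⊗[K] B) :
    Jet (specStructure K B) (specStructure K R) (Spec (.of C)) where
  base := specStructure K C
  hom := (pullbackSpecIso K C B).hom ≫ specMap φ
  w := by
    rw [Category.assoc, specMap_comp_specStructure]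
    exact pullbackSpecIso_hom_base K C B

lemma Jet.eval_ofAlgHom (φ : R →ₐ[K] C ⊗[K] B) {T : Scheme.{u}} (c : T ⟶ Spec (.of (C ⊗[K] B)))
    {a : T ⟶ Spec (.of C)} {b : T ⟶ Spec (.of B)} (ha : c ≫ tensorFst K C B = a)
    (hb : c ≫ tensorSnd K C B = b)
    (h : a ≫ (ofAlgHom φ).base = b ≫ specStructure K B) :
    (ofAlgHom φ).eval a b h = c ≫ specMap φ :=
  (Category.assoc ..).symm.trans
    (congrArg (· ≫ specMap φ) (lift_comp_pullbackSpecIso_hom c ha hb h))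

lemma Jet.pull_ofAlgHom (u : R →ₐ[K] W ⊗[K] B) (ψ : W →ₐ[K] C) :
    (ofAlgHom u).pull (specMap ψ) =
      ofAlgHom ((Algebra.TensorProduct.map ψ (AlgHom.id K B)).comp u) := by
  refine ext_of_eval (specMap_comp_specStructure ψ) fun T a b hx hy => ?_
  obtain ⟨c, rfl, rfl⟩ := exists_comp_tensorFst_tensorSnd a b hy
  rw [eval_pull, eval_ofAlgHom _ c rfl rfl,
    eval_ofAlgHom u (c ≫ specMap (Algebra.TensorProduct.map ψ (AlgHom.id K B))),
    Category.assoc, specMap_comp_specMap]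
  · rw [Category.assoc, specMap_map_comp_tensorFst, Category.assoc]
  · rw [Category.assoc, specMap_map_comp_tensorSnd]

lemma Jet.ofAlgHom_injective :
    Function.Injective (ofAlgHom : (R →ₐ[K] C ⊗[K] B) → _) := by
  intro φ φ' h
  have heval (θ : R →ₐ[K] C ⊗[K] B) :
      (ofAlgHom θ).eval (tensorFst K C B) (tensorSnd K C B) tensorFst_comp_specStructure =
        specMap θ :=
    (eval_ofAlgHom θ (𝟙 _) (Category.id_comp _) (Category.id_comp _) _).trans
      (Category.id_comp _)
  apply specMap_injective
  rw [← heval φ, ← heval φ']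
  exact eval_congr h ..

lemma Jet.exists_ofAlgHom_eq
    (x : Jet (specStructure K B) (specStructure K R) (Spec (.of C)))
    (hx : x.base = specStructure K C) : ∃ φ : R →ₐ[K] C ⊗[K] B, ofAlgHom φ = x := by
  obtain ⟨φ, hφ⟩ := exists_specMap_eq
    (x.eval (tensorFst K C B) (tensorSnd K C B)
      (by rw [hx, tensorFst_comp_specStructure]))
    (by rw [eval_comp_structure, hx]; exact specMap_comp_specStructure _)
  refine ⟨φ, ext_of_eval hx.symm fun T a b ha hb => ?_⟩
  obtain ⟨c, rfl, rfl⟩ := exists_comp_tensorFst_tensorSnd a b ha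
  rw [eval_ofAlgHom φ c rfl rfl, hφ, comp_eval]

lemma IsWeilRestriction.bijective_pull_ofAlgHom {u : R →ₐ[K] W ⊗[K] B} (hu : IsWeilRestriction u)
    (C : CommRingCat.{u}) :
    Function.Bijective fun g : Spec C ⟶ Spec (.of W) => (Jet.ofAlgHom u).pull g := by
  refine ⟨fun g g' h => ?_, fun x => ?_⟩
  · obtain ⟨c, hc⟩ := Spec.map_surjective (g ≫ specStructure K W)
    let _ : Algebra K C := c.hom.toAlgebra
    have hbase : g ≫ specStructure K W = g' ≫ specStructure K W := congrArg Jet.base h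
    obtain ⟨ψ, rfl⟩ := exists_specMap_eq (A' := C) g hc.symm
    obtain ⟨ψ', rfl⟩ := exists_specMap_eq (A' := C) g' (hbase.symm.trans hc.symm)
    simp only [Jet.pull_ofAlgHom] at h
    rw [(hu C).1 (Jet.ofAlgHom_injective h)]
  · obtain ⟨c, hc⟩ := Spec.map_surjective x.base
    let _ : Algebra K C := c.hom.toAlgebra
    obtain ⟨φ, rfl⟩ := Jet.exists_ofAlgHom_eq (C := C) x hc.symm
    obtain ⟨ψ, rfl⟩ := (hu C).2 φ
    exact ⟨specMap ψ, Jet.pull_ofAlgHom u ψ⟩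

lemma Jet.exists_iso_of_bijective_pull {k D S X : Scheme.{u}} {p : D ⟶ k} {s : S ⟶ k}
    (x : Jet p s X)
    (hx : ∀ C : CommRingCat.{u}, Function.Bijective fun g : Spec C ⟶ X => x.pull g) :
    ∃ φ : yoneda.obj X ≅ jetPresheaf p s, yonedaEquiv φ.hom = x := by
  let f : Scheme.zariskiTopology.yoneda.obj X ⟶ ⟨jetPresheaf p s, isSheaf_jetPresheaf p s⟩ :=
    ⟨yonedaEquiv.symm x⟩
  have : IsIso f := isIso_of_bijective_on_affines f hx
  exact ⟨(sheafToPresheaf _ _).mapIso (asIso f),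
    (yonedaEquiv (F := jetPresheaf p s)).apply_symm_apply x⟩

theorem exists_affine_iso_jetPresheaf (K B : Type u) [CommRing K] [CommRing B] [Algebra K B]
    [Module.Free K B] [Module.Finite K B] {R : CommRingCat.{u}} (s : Spec R ⟶ Spec (.of K)) :
    ∃ (W : CommRingCat.{u}) (φ : yoneda.obj (Spec W) ≅ jetPresheaf (specStructure K B) s),
      LocallyOfFiniteType s → LocallyOfFiniteType (yonedaEquiv φ.hom).base := by
  obtain ⟨f, rfl⟩ := Spec.map_surjective s
  let _ : Algebra K R := f.hom.toAlgebra
  obtain ⟨W, _, _, u, hu, hfin⟩ := exists_isWeilRestriction K R B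
  obtain ⟨φ, hφ⟩ := (Jet.ofAlgHom u).exists_iso_of_bijective_pull hu.bijective_pull_ofAlgHom
  refine ⟨.of W, φ, fun hf => ?_⟩
  rw [HasRingHomProperty.Spec_iff (P := @LocallyOfFiniteType)] at hf
  rw [hφ]
  refine (HasRingHomProperty.Spec_iff (P := @LocallyOfFiniteType)).2 ?_
  exact RingHom.finiteType_algebraMap.2 (hfin hf)

end AffineJets

section Representability

open Opposite

variable {k D S J T T' : Scheme.{u}} {p : D ⟶ k} {s : S ⟶ k}

lemma yoneda_map_center (σ : SplitEpi p) (f : yoneda.obj J ⟶ jetPresheaf p s) :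
    yoneda.map ((yonedaEquiv f).center σ) = f ≫ jetPresheafCenter s σ :=
  yonedaEquiv.injective (yonedaEquiv_yoneda_map _)

theorem exists_iso_jetPresheaf_of_openCover (σ : SplitEpi p) [Surjective σ.section_]
    (𝒰 : Scheme.OpenCover.{u} S) {Y : 𝒰.I₀ → Scheme.{u}}
    (φ : ∀ i, yoneda.obj (Y i) ≅ jetPresheaf p (𝒰.f i ≫ s)) :
    ∃ (J : Scheme.{u}) (ψ : yoneda.obj J ≅ jetPresheaf p s), ∀ i, ∃ f' : Y i ⟶ J,
      IsPullback f' ((yonedaEquiv (φ i).hom).center σ) ((yonedaEquiv ψ.hom).center σ)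
        (𝒰.f i) := by
  have h (i) : IsPullback ((φ i).hom ≫ jetPresheafMap p (𝒰.f i))
      (yoneda.map ((yonedaEquiv (φ i).hom).center σ)) (jetPresheafCenter s σ)
      (yoneda.map (𝒰.f i)) := by
    have := 𝒰.map_prop i
    exact .of_iso (isPullback_jetPresheafMap σ (𝒰.f i)) (φ i).symm (.refl _) (.refl _) (.refl _)
      (by simp) (by simp [yoneda_map_center]) (by simp) (by simp)
  obtain ⟨J, ρ, ψ, hψ, hρ⟩ :=
    exists_scheme_of_isPullback (F := ⟨jetPresheaf p s, isSheaf_jetPresheaf p s⟩) h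
  obtain rfl : (yonedaEquiv ψ.hom).center σ = ρ :=
    yoneda.map_injective ((yoneda_map_center σ ψ.hom).trans hψ)
  exact ⟨J, ψ, hρ⟩

lemma base_app_eq (f : yoneda.obj J ⟶ jetPresheaf p s) (g : T ⟶ J) :
    Jet.base (f.app (op T) g) = g ≫ (yonedaEquiv f).base :=
  congrArg Jet.base (map_yonedaEquiv f g).symm

/-- The restriction of a representation `φ` of the presheaf of jets to the schemes with prescribed
structure morphism `t`. -/
def jetHomEquiv (φ : yoneda.obj J ≅ jetPresheaf p s) {sJ : J ⟶ k}
    (hφ : (yonedaEquiv φ.hom).base = sJ) (t : T ⟶ k) :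
    {g : T ⟶ J // g ≫ sJ = t} ≃ {h : pullback t p ⟶ S // h ≫ s = pullback.fst t p ≫ t} :=
  ((φ.app (op T)).toEquiv.subtypeEquiv fun g => by
    rw [← hφ, ← base_app_eq]
    rfl).trans (Jet.fiberEquiv s t)

lemma jetHomEquiv_comp (φ : yoneda.obj J ≅ jetPresheaf p s) {sJ : J ⟶ k}
    (hφ : (yonedaEquiv φ.hom).base = sJ) {t : T ⟶ k} {t' : T' ⟶ k} (f : T ⟶ T')
    (hf : f ≫ t' = t) (g : T' ⟶ J) (hg : g ≫ sJ = t') :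
    (jetHomEquiv φ hφ t ⟨f ≫ g, by rw [Category.assoc, hg, hf]⟩).1 =
      pullback.map t p t' p f (𝟙 D) (𝟙 k) (by simp [hf]) (by simp) ≫
        (jetHomEquiv φ hφ t' ⟨g, hg⟩).1 := by
  have hpull : φ.hom.app (op T) (f ≫ g) = Jet.pull f (φ.hom.app (op T') g) :=
    ConcreteCategory.congr_hom (φ.hom.naturality f.op) g
  refine Eq.trans ?_ (Jet.fiberEquiv_pull f hf (φ.hom.app (op T') g)
    ((base_app_eq φ.hom g).trans (hφ ▸ hg)))
  exact congrArg (fun x => (Jet.fiberEquiv s t x).1) (Subtype.ext hpull)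

end Representability

section FreeAlgebra

variable {K B : Type u} [CommRing K] [CommRing B] [Algebra K B] [Module.Free K B]
  [Module.Finite K B] {S : Scheme.{u}}

theorem exists_iso_jetPresheaf (s : S ⟶ Spec (.of K)) (σ : SplitEpi (specStructure K B))
    [Surjective σ.section_] :
    ∃ (J : Scheme.{u}) (φ : yoneda.obj J ≅ jetPresheaf (specStructure K B) s),
      IsAffineHom ((yonedaEquiv φ.hom).center σ) ∧
        (LocallyOfFiniteType s → LocallyOfFiniteType ((yonedaEquiv φ.hom).center σ)) := by
  choose W φ hφ using fun i => exists_affine_iso_jetPresheaf K B (S.affineCover.f i ≫ s)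
  obtain ⟨J, ψ, hψ⟩ := exists_iso_jetPresheaf_of_openCover σ S.affineCover φ
  refine ⟨J, ψ, ?_, fun hs => ?_⟩
  · have : IsZariskiLocalAtTarget (@IsAffineHom.{u}) :=
      @HasAffineProperty.instIsZariskiLocalAtTarget @IsAffineHom _
        instHasAffinePropertyIsAffineHomIsAffine
    refine of_forall_isPullback_openCover hψ fun i => ?_
    have : IsAffine (S.affineCover.X i) := isAffine_Spec _
    infer_instance
  · have : IsZariskiLocalAtTarget (@LocallyOfFiniteType.{u}) :=
      HasRingHomProperty.instIsZariskiLocalAtTarget @LocallyOfFiniteType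
        (Q := RingHom.FiniteType)
    refine of_forall_isPullback_openCover hψ fun i => ?_
    have : IsOpenImmersion (S.affineCover.f i) := S.affineCover.map_prop i
    have hcomp := Jet.center_comp_structure σ (yonedaEquiv (φ i).hom)
    have : LocallyOfFiniteType (S.affineCover.f i ≫ s) := locallyOfFiniteType_comp _ _
    exact @locallyOfFiniteType_of_comp _ _ _ _ (S.affineCover.f i ≫ s) (hcomp ▸ hφ i this)

theorem jet_scheme_representable_general (ε : B →ₐ[K] K) (hε : RingHom.ker ε ≤ nilradical B)
    (s : S ⟶ Spec (.of K)) :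
    ∃ (J : Scheme.{u}) (π : J ⟶ S),
      IsAffineHom π ∧ (LocallyOfFiniteType s → LocallyOfFiniteType π) ∧
      ∃ e : ∀ (T : Scheme.{u}) (t : T ⟶ Spec (.of K)), {g : T ⟶ J // g ≫ π ≫ s = t} ≃
          {h : pullback t (specStructure K B) ⟶ S //
            h ≫ s = pullback.fst t (specStructure K B) ≫ t},
        ∀ (T T' : Scheme.{u}) (t : T ⟶ Spec (.of K)) (t' : T' ⟶ Spec (.of K)) (f : T ⟶ T')
          (hf : f ≫ t' = t) (g : T' ⟶ J) (hg : g ≫ π ≫ s = t'),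
          (e T t ⟨f ≫ g, by rw [Category.assoc, hg, hf]⟩).1 =
            pullback.map t (specStructure K B) t' (specStructure K B) f (𝟙 _) (𝟙 _)
              (by simp [hf]) (by simp) ≫ (e T' t' ⟨g, hg⟩).1 := by
  let σ := augmentationSplitEpi ε
  have : Surjective σ.section_ :=
    surjective_specMap_of_ker_le_nilradical (augmentation_surjective ε) hε
  obtain ⟨J, φ, haff, hfin⟩ := exists_iso_jetPresheaf s σ
  exact ⟨J, (yonedaEquiv φ.hom).center σ, haff, hfin,
    fun T t => jetHomEquiv φ (Jet.center_comp_structure ..).symm t,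
    fun T T' t t' f hf g hg => jetHomEquiv_comp φ _ f hf g hg⟩

end FreeAlgebra

section JetAlgebra

variable (K : Type) [Field K] (d r : ℕ)

/-- The augmentation of `A^d_r` at the origin of the disk. -/
def jetAugmentation : jetAlgebra K d r →ₐ[K] K :=
  Ideal.Quotient.liftₐ _ (aeval 0) <| by
    suffices idealOfVars (Fin d) K ≤ RingHom.ker (aeval (0 : Fin d → K)) from
      fun f hf => this (Ideal.pow_le_self r.succ_ne_zero hf)
    rw [Ideal.span_le]
    rintro _ ⟨i, rfl⟩
    exact aeval_X ..

lemma ker_jetAugmentation_le_nilradical :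
    RingHom.ker (jetAugmentation K d r) ≤ nilradical (jetAlgebra K d r) := by
  intro x hx
  obtain ⟨f, rfl⟩ := Ideal.Quotient.mk_surjective x
  have hcoeff : constantCoeff f = 0 := (aeval_zero (S₁ := K) f).symm.trans hx
  have hf : f ∈ idealOfVars (Fin d) K := by
    rw [← pow_one (idealOfVars (Fin d) K), mem_pow_idealOfVars_iff']
    intro m hm
    rwa [(Finsupp.degree_eq_zero_iff m).1 (Nat.lt_one_iff.1 hm)]
  exact ⟨r + 1, Ideal.Quotient.eq_zero_iff_mem.2 (Ideal.pow_mem_pow hf _)⟩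

instance moduleFinite_jetAlgebra : Module.Finite K (jetAlgebra K d r) :=
  Module.finite_of_surjective_of_ker_le_nilradical (jetAugmentation K d r)
    (augmentation_surjective _) (ker_jetAugmentation_le_nilradical K d r)
    (IsNoetherian.noetherian _)

end JetAlgebra

/-- For every separated finite-type `K`-scheme `S`, the contravariant functor
`T ↦ Hom_K(T ×_K 𝔻^d_r, S)` on separated finite-type `K`-schemes (acting on a morphism
`u : T ⟶ T'` by precomposition with the induced morphism `T ×_K 𝔻^d_r ⟶ T' ×_K 𝔻^d_r`) is
representable by a separated finite-type `K`-scheme `J` (the jet scheme `J^d_r S`): there are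
bijections `Hom_K(T, J) ≃ Hom_K(T ×_K 𝔻^d_r, S)`, natural in `T`. -/
theorem jet_scheme_representable
    (K : Type) [Field K] (d r : ℕ)
    (S : Scheme) (sS : S ⟶ Spec (CommRingCat.of K))
    [IsSeparated sS] [LocallyOfFiniteType sS] [QuasiCompact sS] :
    ∃ (J : Scheme) (sJ : J ⟶ Spec (CommRingCat.of K)),
      IsSeparated sJ ∧ LocallyOfFiniteType sJ ∧ QuasiCompact sJ ∧
      ∃ e : ∀ (T : Scheme) (tT : T ⟶ Spec (CommRingCat.of K)),
          IsSeparated tT → LocallyOfFiniteType tT → QuasiCompact tT →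
          ({ g : T ⟶ J // g ≫ sJ = tT } ≃
            { h : pullback tT (diskMap K d r) ⟶ S //
                h ≫ sS = pullback.fst tT (diskMap K d r) ≫ tT }),
        ∀ (T T' : Scheme) (tT : T ⟶ Spec (CommRingCat.of K))
          (tT' : T' ⟶ Spec (CommRingCat.of K))
          (h1 : IsSeparated tT) (h2 : LocallyOfFiniteType tT) (h3 : QuasiCompact tT)
          (h1' : IsSeparated tT') (h2' : LocallyOfFiniteType tT') (h3' : QuasiCompact tT')
          (u : T ⟶ T') (hu : u ≫ tT' = tT) (g : T' ⟶ J) (hg : g ≫ sJ = tT'),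
          (↑(e T tT h1 h2 h3 ⟨u ≫ g, by rw [Category.assoc, hg, hu]⟩) :
              pullback tT (diskMap K d r) ⟶ S) =
            pullback.map tT (diskMap K d r) tT' (diskMap K d r) u (𝟙 _)
                (𝟙 (Spec (CommRingCat.of K))) (by rw [hu, Category.comp_id])
                (by rw [Category.comp_id, Category.id_comp]) ≫
              ↑(e T' tT' h1' h2' h3' ⟨g, hg⟩) := by
  obtain ⟨J, π, _, hπ, e, he⟩ := jet_scheme_representable_general (jetAugmentation K d r)
    (ker_jetAugmentation_le_nilradical K d r) sS
  have : LocallyOfFiniteType π := hπ inferInstance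
  exact ⟨J, π ≫ sS, inferInstance, inferInstance, inferInstance, fun T t _ _ _ => e T t,
    fun T T' t t' _ _ _ _ _ _ => he T T' t t'⟩

end
end

section
/- Let K be a field, let d, r ≥ 0 be integers, let A = A^d_r, and let m ⊆ A be the maximal ideal generated by the classes of t₁,…,t_d. Let R be a commutative K-algebra and φ : R → A a K-algebra homomorphism such that for each i with 1 ≤ i ≤ d there exists z_i ∈ R with φ(z_i) − t_i ∈ m². Then φ is surjective. -/
/-!
Choose `z i : R` with `φ (z i) - t i ∈ m ^ 2`, and let `I` be the ideal of `R` generated by the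
`z i`. Nakayama's lemma for the nilpotent ideal `m` shows that the `φ (z i)` still generate `m`, so
`m = I A`. Since `A` is generated by the `t i`, every element of `A` is a constant plus an element
of `m`; hence `A = φ(R) + I A`, and Nakayama's lemma for the `R`-module `A`, on which `I` acts
nilpotently, gives `A = φ(R)`.
-/

open MvPolynomial

section Nakayama

variable {R M : Type*} [CommSemiring R] [AddCommMonoid M] [Module R M]
  {I : Ideal R} {N N' : Submodule R M}

theorem le_sup_pow_smul_of_le_sup_smul (h : N' ≤ N ⊔ I • N') (n : ℕ) : N' ≤ N ⊔ I ^ n • N' := by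
  induction n with
  | zero => simp
  | succ n ih =>
    calc
      N' ≤ N ⊔ I ^ n • N' := ih
      _ ≤ N ⊔ I ^ n • (N ⊔ I • N') := by gcongr
      _ = N ⊔ (I ^ n • N ⊔ I ^ (n + 1) • N') := by
        rw [Submodule.smul_sup, pow_succ, Submodule.mul_smul]
      _ ≤ N ⊔ I ^ (n + 1) • N' :=
        sup_le le_sup_left (sup_le_sup_right Submodule.smul_le_right _)

theorem le_of_le_sup_smul_of_pow_smul_eq_bot {n : ℕ} (hI : I ^ n • N' = ⊥)
    (h : N' ≤ N ⊔ I • N') : N' ≤ N := by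
  simpa [hI] using le_sup_pow_smul_of_le_sup_smul h n

end Nakayama

theorem surjective_of_surjective_mk_comp_of_isNilpotent_map {R S : Type*} [CommRing R] [CommRing S]
    (f : R →+* S) {I : Ideal R} (hI : IsNilpotent (I.map f))
    (h : Function.Surjective ((Ideal.Quotient.mk (I.map f)).comp f)) : Function.Surjective f := by
  algebraize [f]
  obtain ⟨n, hn⟩ := hI
  have hpow : I ^ n • (⊤ : Submodule R S) = ⊥ := by
    simpa [Ideal.map_pow, ← RingHom.algebraMap_toAlgebra f] using hn
  have htop : (⊤ : Submodule R S) ≤ LinearMap.range (Algebra.linearMap R S) ⊔ I • ⊤ := by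
    intro s _
    obtain ⟨x, hx⟩ := h (Ideal.Quotient.mk _ s)
    rw [← add_sub_cancel (f x) s]
    refine Submodule.add_mem_sup ⟨x, rfl⟩ ?_
    rw [Ideal.smul_top_eq_map]
    exact Ideal.Quotient.eq.mp hx.symm
  exact LinearMap.range_eq_top.mp
    (top_le_iff.mp (le_of_le_sup_smul_of_pow_smul_eq_bot hpow htop))

theorem span_range_eq_of_sub_mem_sq {A ι : Type*} [CommRing A] {t u : ι → A}
    (ht : IsNilpotent (Ideal.span (Set.range t)))
    (hu : ∀ i, u i - t i ∈ Ideal.span (Set.range t) ^ 2) :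
    Ideal.span (Set.range u) = Ideal.span (Set.range t) := by
  set m := Ideal.span (Set.range t)
  have ht_mem (i : ι) : t i ∈ m := Ideal.subset_span (Set.mem_range_self i)
  apply le_antisymm
  · rw [Ideal.span_le, Set.range_subset_iff]
    intro i
    exact (Submodule.sub_mem_iff_left m (ht_mem i)).mp (Ideal.pow_le_self two_ne_zero (hu i))
  · obtain ⟨n, hn⟩ := ht
    refine le_of_le_sup_smul_of_pow_smul_eq_bot (I := m) (n := n) (by simp [hn]) ?_
    rw [Ideal.span_le, Set.range_subset_iff]
    intro i
    rw [← sub_sub_cancel (u i) (t i)]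
    refine sub_mem (Submodule.mem_sup_left (Ideal.subset_span (Set.mem_range_self i))) ?_
    exact Submodule.mem_sup_right (by simpa [pow_two] using hu i)

theorem adjoin_image_eq_top_of_surjective {K A B : Type*} [CommSemiring K] [Semiring A]
    [Semiring B] [Algebra K A] [Algebra K B] {f : A →ₐ[K] B} (hf : Function.Surjective f)
    {s : Set A} (hs : Algebra.adjoin K s = ⊤) : Algebra.adjoin K (f '' s) = ⊤ := by
  rw [← AlgHom.map_adjoin, hs, Algebra.map_top, (AlgHom.range_eq_top f).mpr hf]

theorem algebraMap_quotient_span_surjective {K A : Type*} [CommSemiring K] [CommRing A]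
    [Algebra K A] {s : Set A} (hs : Algebra.adjoin K s = ⊤) :
    Function.Surjective (algebraMap K (A ⧸ Ideal.span s)) := by
  have himage : Ideal.Quotient.mkₐ K (Ideal.span s) '' s ⊆ {0} := by
    rintro _ ⟨a, ha, rfl⟩
    exact Ideal.Quotient.eq_zero_iff_mem.mpr (Ideal.subset_span ha)
  rw [Algebra.surjective_algebraMap_iff, eq_bot_iff,
    ← adjoin_image_eq_top_of_surjective (Ideal.Quotient.mkₐ_surjective K (Ideal.span s)) hs]
  exact Algebra.adjoin_le (himage.trans (Set.singleton_subset_iff.mpr (zero_mem ⊥)))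

theorem isNilpotent_span_range_mk_pow {A ι : Type*} [CommRing A] (t : ι → A) (n : ℕ) :
    IsNilpotent (Ideal.span (Set.range fun i =>
      Ideal.Quotient.mk (Ideal.span (Set.range t) ^ n) (t i))) := by
  rw [Set.range_comp' (Ideal.Quotient.mk _) t, ← Ideal.map_span]
  exact ⟨n, by rw [← Ideal.map_pow, Ideal.map_quotient_self, Ideal.zero_eq_bot]⟩

theorem adjoin_range_mk_X {σ K : Type*} [CommRing K] (J : Ideal (MvPolynomial σ K)) :
    Algebra.adjoin K (Set.range fun i : σ => Ideal.Quotient.mk J (X i)) = ⊤ := by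
  rw [Set.range_comp' (Ideal.Quotient.mk J) X]
  exact adjoin_image_eq_top_of_surjective (Ideal.Quotient.mkₐ_surjective K J) adjoin_range_X

theorem surjective_of_hits_generators_mod_sq_general {K R A ι : Type*} [CommSemiring K]
    [CommRing R] [Algebra K R] [CommRing A] [Algebra K A] (φ : R →ₐ[K] A) {t : ι → A}
    (ht : Algebra.adjoin K (Set.range t) = ⊤) {m : Ideal A} (hm : m = Ideal.span (Set.range t))
    (hnil : IsNilpotent m) (hz : ∀ i, ∃ z : R, φ z - t i ∈ m ^ 2) : Function.Surjective φ := by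
  subst hm
  choose z hz using hz
  have hmap : (Ideal.span (Set.range z)).map (φ : R →+* A) = Ideal.span (Set.range t) := by
    rw [Ideal.map_span, ← Set.range_comp]
    exact span_range_eq_of_sub_mem_sq hnil hz
  apply surjective_of_surjective_mk_comp_of_isNilpotent_map (φ : R →+* A) (hmap ▸ hnil)
  rw [hmap]
  intro a
  obtain ⟨c, hc⟩ := algebraMap_quotient_span_surjective ht a
  exact ⟨algebraMap K R c, by simpa using hc⟩

/-- Let `A = A^d_r`, `m ⊆ A` the maximal ideal generated by the classes of
`t₁,…,t_d`, `R` a commutative `K`-algebra, and `φ : R → A` a `K`-algebra homomorphism such that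
for every `i` there is `z_i ∈ R` with `φ(z_i) − t_i ∈ m²`. Then `φ` is surjective. -/
theorem surjective_of_hits_generators_mod_sq
    (K : Type) [Field K] (d r : ℕ)
    (R : Type) [CommRing R] [Algebra K R]
    (φ : R →ₐ[K] jetAlgebra K d r)
    (m : Ideal (jetAlgebra K d r))
    (hm : m = Ideal.span (Set.range fun i : Fin d =>
      Ideal.Quotient.mk
        ((Ideal.span (Set.range (X : Fin d → MvPolynomial (Fin d) K))) ^ (r + 1))
        (X i)))
    (hz : ∀ i : Fin d, ∃ z : R,
      φ z - Ideal.Quotient.mk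
        ((Ideal.span (Set.range (X : Fin d → MvPolynomial (Fin d) K))) ^ (r + 1))
        (X i) ∈ m ^ 2) :
    Function.Surjective φ := by
  exact surjective_of_hits_generators_mod_sq_general φ (adjoin_range_mk_X _) hm
    (hm ▸ isNilpotent_span_range_mk_pow X (r + 1)) hz
end

section
/- Let K be a field, let d ≥ 0 be an integer, and let R be a Noetherian local commutative ring. Suppose that for every integer r ≥ 0 there exists a surjective ring homomorphism R → A^d_r. Then the Krull dimension of R is at least d. -/
open MvPolynomial

/-!
Choose a system of parameters `s` of `R` and `c` with `𝔪_R ^ c ≤ (s)`. A surjection of `R` onto the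
jets of order `c` at a maximal ideal `m` of a Noetherian ring `S` lets us lift `s` to a set `t` of
at most `dim R` elements of `m` with `m ^ c ≤ (t) + m ^ (c + 1)`. By Nakayama's lemma `m` is minimal
over `(t)`, so Krull's height theorem gives `height m ≤ dim R`. The ideal of the origin in affine
`d`-space has height at least `d`, as the coordinate subspaces show.
-/

section IdealOfVars

variable {σ : Type*} (R : Type*)

theorem ker_constantCoeff_eq_idealOfVars [CommSemiring R] :
    RingHom.ker (constantCoeff : MvPolynomial σ R →+* R) = idealOfVars σ R := by
  ext p
  rw [← pow_one (idealOfVars σ R), mem_pow_idealOfVars_iff, RingHom.mem_ker, constantCoeff_eq]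
  simp only [mem_support_iff, Nat.one_le_iff_ne_zero, ne_eq, Finsupp.degree_eq_zero_iff]
  exact ⟨fun h₀ x hx hx₀ => hx (hx₀ ▸ h₀), fun h => by_contra fun h₀ => h 0 h₀ rfl⟩

instance isMaximal_idealOfVars [Field R] : (idealOfVars σ R).IsMaximal :=
  ker_constantCoeff_eq_idealOfVars (σ := σ) R ▸
    RingHom.ker_isMaximal_of_surjective _ fun a => ⟨C a, constantCoeff_C σ a⟩

theorem span_X_image_eq_ker_aeval_indicator [CommRing R] (s : Set σ) :
    Ideal.span (X '' s) =
      RingHom.ker (aeval (sᶜ.indicator X) : MvPolynomial σ R →ₐ[R] MvPolynomial σ R) := by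
  set φ : MvPolynomial σ R →ₐ[R] MvPolynomial σ R := aeval (sᶜ.indicator X)
  set I : Ideal (MvPolynomial σ R) := Ideal.span (X '' s)
  refine le_antisymm (Ideal.span_le.mpr ?_) fun p hp => ?_
  · rintro _ ⟨i, hi, rfl⟩
    simp [φ, hi]
  · have mk_comp_φ : (Ideal.Quotient.mkₐ R I).comp φ = Ideal.Quotient.mkₐ R I := by
      refine algHom_ext fun i => ?_
      by_cases hi : i ∈ s
      · have hX : X i ∈ I := Ideal.subset_span (Set.mem_image_of_mem X hi)
        simpa [φ, hi] using (Ideal.Quotient.eq_zero_iff_mem.mpr hX).symm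
      · simp [φ, hi]
    have hφp : φ p = 0 := hp
    refine Ideal.Quotient.eq_zero_iff_mem.mp ?_
    simpa [hφp] using (DFunLike.congr_fun mk_comp_φ p).symm

theorem isPrime_span_X_image [CommRing R] [IsDomain R] (s : Set σ) :
    (Ideal.span (X '' s : Set (MvPolynomial σ R))).IsPrime := by
  rw [span_X_image_eq_ker_aeval_indicator]
  exact RingHom.ker_isPrime _

theorem X_mem_span_X_image_iff [CommSemiring R] [Nontrivial R] {s : Set σ} {i : σ} :
    (X i : MvPolynomial σ R) ∈ Ideal.span (X '' s) ↔ i ∈ s := by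
  classical
  simp [mem_ideal_span_X_image, support_X, Finsupp.single_apply]

theorem card_le_height_span_X_image [CommRing R] [IsDomain R] (s : Finset σ) :
    (s.card : ℕ∞) ≤ (Ideal.span (X '' s : Set (MvPolynomial σ R))).height := by
  classical
  induction s using Finset.induction_on with
  | empty => simp
  | insert i s hi ih =>
    have span_lt : Ideal.span (X '' s : Set (MvPolynomial σ R)) <
        Ideal.span (X '' (insert i s : Finset σ)) := by
      refine SetLike.lt_iff_le_and_exists.mpr ⟨Ideal.span_mono (by gcongr; simp), X i, ?_, ?_⟩
      · simp [X_mem_span_X_image_iff]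
      · simpa [X_mem_span_X_image_iff] using hi
    have := isPrime_span_X_image R (s : Set σ)
    have := isPrime_span_X_image R ((insert i s : Finset σ) : Set σ)
    rw [Finset.card_insert_of_notMem hi, Nat.cast_succ]
    grw [ih]
    exact Ideal.height_add_one_le_of_lt_of_isPrime span_lt

theorem card_le_height_idealOfVars [CommRing R] [IsDomain R] [Fintype σ] :
    (Fintype.card σ : ℕ∞) ≤ (idealOfVars σ R).height := by
  simpa using card_le_height_span_X_image R (Finset.univ : Finset σ)

end IdealOfVars

theorem mem_minimalPrimes_of_pow_le_sup_pow_succ {S : Type*} [CommRing S] {m J : Ideal S}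
    [hm : m.IsPrime] (hfg : m.FG) (hJ : J ≤ m) {c : ℕ} (h : m ^ c ≤ J ⊔ m ^ (c + 1)) :
    m ∈ J.minimalPrimes := by
  rw [pow_succ', ← smul_eq_mul] at h
  obtain ⟨u, hu, hle⟩ :=
    Submodule.exists_sub_one_mem_and_smul_le_of_fg_of_le_sup hfg.pow le_rfl h
  have hum : u ∉ m := fun hum => hm.one_notMem (by simpa using sub_mem hum hu)
  refine ⟨⟨hm, hJ⟩, fun p ⟨hp, hJp⟩ hpm => hp.le_of_pow_le (n := c) fun x hx => ?_⟩
  have hux : u * x ∈ p := hJp (hle (Submodule.smul_mem_pointwise_smul x u _ hx))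
  exact (hp.mem_or_mem hux).resolve_left fun hup => hum (hpm hup)

section IsLocalRing

open IsLocalRing

variable {R : Type*} [CommRing R] [IsLocalRing R]

theorem map_maximalIdeal_eq_of_surjective {A : Type*} [CommRing A] {f : R →+* A}
    (hf : Function.Surjective f) (M : Ideal A) [M.IsMaximal] :
    (maximalIdeal R).map f = M := by
  rw [← eq_maximalIdeal (Ideal.comap_isMaximal_of_surjective f hf (K := M)),
    Ideal.map_comap_of_surjective f hf]

theorem exists_finset_card_eq_ringKrullDim_and_pow_maximalIdeal_le [IsNoetherianRing R] :
    ∃ s : Finset R, (s.card : WithBot ℕ∞) = ringKrullDim R ∧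
      Ideal.span s ≤ maximalIdeal R ∧ ∃ c : ℕ, maximalIdeal R ^ c ≤ Ideal.span s := by
  obtain ⟨s, hs, hcard⟩ := (maximalIdeal R).exists_finset_card_eq_height_of_isNoetherianRing
  have le_radical : maximalIdeal R ≤ (Ideal.span (s : Set R)).radical := by
    rw [← Ideal.sInf_minimalPrimes]
    exact le_sInf fun p hp => hs.2 hp.1 (le_maximalIdeal hp.1.1.ne_top)
  refine ⟨s, ?_, hs.1.2,
    Ideal.exists_pow_le_of_le_radical_of_fg le_radical (maximalIdeal R).fg_of_isNoetherianRing⟩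
  rw [← maximalIdeal_height_eq_ringKrullDim, ← hcard]
  rfl

end IsLocalRing

theorem exists_finset_card_le_and_map_span_eq {R S A : Type*} [Semiring R] [Semiring S]
    [Semiring A] (f : R →+* A) {q : S →+* A} (hq : Function.Surjective q) (s : Finset R) :
    ∃ t : Finset S, t.card ≤ s.card ∧ (Ideal.span t).map q = (Ideal.span s).map f := by
  classical
  refine ⟨s.image (Function.surjInv hq ∘ f), Finset.card_image_le, ?_⟩
  simp [Ideal.map_span, Set.image_image, Function.surjInv_eq hq]

theorem map_mk_le_map_mk_iff {S : Type*} [CommRing S] {I J J' : Ideal S} :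
    J.map (Ideal.Quotient.mk I) ≤ J'.map (Ideal.Quotient.mk I) ↔ J ≤ J' ⊔ I := by
  rw [Ideal.map_le_iff_le_comap, Ideal.comap_map_quotientMk, sup_comm]

theorem krullDim_ge_of_surjects_onto_jetAlgebras_general {R S : Type*}
    [CommRing R] [IsNoetherianRing R] [IsLocalRing R] [CommRing S] [IsNoetherianRing S]
    (m : Ideal S) [m.IsMaximal]
    (h : ∀ r : ℕ, ∃ f : R →+* S ⧸ m ^ (r + 1), Function.Surjective f) :
    (m.height : WithBot ℕ∞) ≤ ringKrullDim R := by
  obtain ⟨s, hcard, hs, c, hc⟩ :=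
    exists_finset_card_eq_ringKrullDim_and_pow_maximalIdeal_le (R := R)
  obtain ⟨f, hf⟩ := h c
  set q := Ideal.Quotient.mk (m ^ (c + 1))
  have hq : Function.Surjective q := Ideal.Quotient.mk_surjective
  have pow_le : m ^ (c + 1) ≤ m := Ideal.pow_le_self c.succ_ne_zero
  have : (m.map q).IsMaximal :=
    Ideal.IsMaximal.map_of_surjective_of_ker_le hq (Ideal.mk_ker.trans_le pow_le)
  have map_maximalIdeal := map_maximalIdeal_eq_of_surjective hf (m.map q)
  obtain ⟨t, htcard, ht⟩ := exists_finset_card_le_and_map_span_eq f hq s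
  have span_le : Ideal.span t ≤ m := by
    rw [← sup_eq_left.mpr pow_le, ← map_mk_le_map_mk_iff, ht, ← map_maximalIdeal]
    exact Ideal.map_mono hs
  have pow_le_sup : m ^ c ≤ Ideal.span t ⊔ m ^ (c + 1) := by
    rw [← map_mk_le_map_mk_iff, ht, Ideal.map_pow, ← map_maximalIdeal, ← Ideal.map_pow]
    exact Ideal.map_mono hc
  have hmin := mem_minimalPrimes_of_pow_le_sup_pow_succ m.fg_of_isNoetherianRing span_le pow_le_sup
  rw [← hcard]
  exact_mod_cast (Ideal.height_le_card_of_mem_minimalPrimes_span_finset hmin).trans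
    (Nat.cast_le.mpr htcard)

/-- Let `K` be a field, `d ≥ 0`, and `R` a Noetherian local commutative ring.
If for every `r ≥ 0` there is a surjective ring homomorphism `R → A^d_r`, then the Krull
dimension of `R` is at least `d`. -/
theorem krullDim_ge_of_surjects_onto_jetAlgebras
    (K : Type) [Field K] (d : ℕ)
    (R : Type) [CommRing R] [IsNoetherianRing R] [IsLocalRing R]
    (h : ∀ r : ℕ, ∃ f : R →+* jetAlgebra K d r, Function.Surjective f) :
    (d : WithBot ℕ∞) ≤ ringKrullDim R := by
  have hd : (d : ℕ∞) ≤ (idealOfVars (Fin d) K).height := by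
    simpa using card_le_height_idealOfVars (σ := Fin d) K
  exact (WithBot.coe_le_coe.mpr hd).trans
    (krullDim_ge_of_surjects_onto_jetAlgebras_general _ h)
end

section
/- For each r ∈ ℕ let n_r ∈ ℕ, let T_r ⊆ ℂ^{n_r} be a constructible subset, and let π_r : ℂ^{n_{r+1}} → ℂ^{n_r} be a polynomial map (each coordinate given by a polynomial) such that π_r(T_{r+1}) ⊆ T_r. For r' ≥ r write π^{r'}_r : ℂ^{n_{r'}} → ℂ^{n_r} for the composite π_r ∘ π_{r+1} ∘ ⋯ ∘ π_{r'−1} (with π^r_r the identity). Fix r₀ ∈ ℕ and j ∈ T_{r₀}, and suppose that for every r' ≥ r₀ there exists x ∈ T_{r'} with π^{r'}_{r₀}(x) = j. Then there exists a sequence (j_r)_{r ≥ 0} with j_r ∈ T_r for every r, with π_r(j_{r+1}) = j_r for every r, and with j_{r₀} = j. -/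
/-- A subset of `ℂᵐ` is (polynomially) constructible if it is a finite union of sets of the
form `{x : p₁(x) = ⋯ = p_s(x) = 0 ∧ q(x) ≠ 0}` for polynomials `p₁,…,p_s, q`. -/
def PolyConstructible {m : ℕ} (C : Set (Fin m → ℂ)) : Prop :=
  ∃ (k : ℕ) (P : Fin k → Finset (MvPolynomial (Fin m) ℂ)) (Q : Fin k → MvPolynomial (Fin m) ℂ),
    C = ⋃ i : Fin k,
      {x : Fin m → ℂ | (∀ p ∈ P i, MvPolynomial.eval x p = 0) ∧ MvPolynomial.eval x (Q i) ≠ 0}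

/-- The composite `π^{r+k}_r = π_r ∘ π_{r+1} ∘ ⋯ ∘ π_{r+k−1} : ℂ^{n_{r+k}} → ℂ^{n_r}`
(with `π^r_r` the identity). -/
def compMaps (n : ℕ → ℕ) (π : ∀ r : ℕ, (Fin (n (r + 1)) → ℂ) → (Fin (n r) → ℂ)) (r : ℕ) :
    ∀ k : ℕ, (Fin (n (r + k)) → ℂ) → (Fin (n r) → ℂ)
  | 0 => id
  | k + 1 => fun x => compMaps n π r k (π (r + k) x)

/-!
Points of the tower that are compatible up to level `r₀ + k`, for `k = 0, 1, 2, …`, form a sequence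
in the single affine space on the countable index set `Σ r, Fin (n r)`. Along an ultrafilter
refining this sequence, one locally closed piece of each `T r` is visited eventually, so it suffices
to find a common zero, off the loci of countably many inequations, of all the polynomials that
vanish eventually. Inverting the inequations by new variables leaves a proper ideal in countably
many variables. It has a zero because an uncountable algebraically closed field `K` has no proper
field extension `L` of countable dimension: the elements `(x - a)⁻¹`, `a : K`, are linearly
independent for `x : L` transcendental.
-/

open Filter MvPolynomial

universe u v

section Nullstellensatz

theorem isAlgebraic_of_lift_rank_lt_mk {K : Type u} {L : Type v} [Field K] [Field L] [Algebra K L]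
    (h : Cardinal.lift.{u} (Module.rank K L) < Cardinal.lift.{v} (Cardinal.mk K)) :
    Algebra.IsAlgebraic K L := by
  refine ⟨fun x => ?_⟩
  by_contra hx
  have hx : Transcendental K x := hx
  exact h.not_ge hx.linearIndependent_sub_inv.cardinal_lift_le_rank

theorem nonempty_algHom_of_lift_rank_lt_mk {K : Type u} {A : Type v} [Field K] [IsAlgClosed K]
    [CommRing A] [Nontrivial A] [Algebra K A]
    (h : Cardinal.lift.{u} (Module.rank K A) < Cardinal.lift.{v} (Cardinal.mk K)) :
    Nonempty (A →ₐ[K] K) := by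
  obtain ⟨M, hM⟩ := Ideal.exists_maximal A
  let : Field (A ⧸ M) := Ideal.Quotient.field M
  have hrank : Module.rank K (A ⧸ M) ≤ Module.rank K A :=
    LinearMap.rank_le_of_surjective (Ideal.Quotient.mkₐ K M).toLinearMap
      (Ideal.Quotient.mkₐ_surjective K M)
  have : Algebra.IsAlgebraic K (A ⧸ M) :=
    isAlgebraic_of_lift_rank_lt_mk ((Cardinal.lift_le.2 hrank).trans_lt h)
  exact ⟨(IsAlgClosed.lift : A ⧸ M →ₐ[K] K).comp (Ideal.Quotient.mkₐ K M)⟩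

theorem zeroLocus_nonempty_of_ne_top {σ K : Type*} [Countable σ] [Field K] [IsAlgClosed K]
    [Uncountable K] {I : Ideal (MvPolynomial σ K)} (hI : I ≠ ⊤) : (zeroLocus K I).Nonempty := by
  have : Nontrivial (MvPolynomial σ K ⧸ I) := Ideal.Quotient.nontrivial_iff.2 hI
  have hrank : Module.rank K (MvPolynomial σ K ⧸ I) ≤ Cardinal.aleph0 := by
    refine (LinearMap.rank_le_of_surjective (Ideal.Quotient.mkₐ K I).toLinearMap
      (Ideal.Quotient.mkₐ_surjective K I)).trans ?_
    rw [MvPolynomial.rank_eq_lift, Cardinal.lift_le_aleph0]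
    exact Cardinal.mk_le_aleph0
  obtain ⟨φ⟩ := nonempty_algHom_of_lift_rank_lt_mk (K := K) (A := MvPolynomial σ K ⧸ I)
    ((Cardinal.lift_le_aleph0.2 hrank).trans_lt (Cardinal.aleph0_lt_lift.2 Cardinal.aleph0_lt_mk))
  let ψ : MvPolynomial σ K →ₐ[K] K := φ.comp (Ideal.Quotient.mkₐ K I)
  refine ⟨ψ ∘ X, fun p hp => ?_⟩
  rw [← aeval_unique ψ]
  change φ (Ideal.Quotient.mk I p) = 0
  rw [Ideal.Quotient.eq_zero_iff_mem.2 hp, map_zero]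

end Nullstellensatz

section ZariskiClusterPt

variable {σ τ R : Type*} [CommRing R]

/-- The ideal of polynomials vanishing on some member of the filter `l`. -/
def eventuallyVanishingIdeal (l : Filter (σ → R)) : Ideal (MvPolynomial σ R) where
  carrier := {p | ∀ᶠ y in l, eval y p = 0}
  zero_mem' := .of_forall fun _ => map_zero _
  add_mem' hp hq := by
    filter_upwards [hp, hq] with y hp hq
    rw [map_add, hp, hq, add_zero]
  smul_mem' c p hp := by
    filter_upwards [hp] with y hp
    rw [smul_eq_mul, map_mul, hp, mul_zero]

/-- `x` is a cluster point of the filter `l` for the Zariski topology: it lies in the Zariski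
closure of every member of `l`. -/
def ZariskiClusterPt (x : σ → R) (l : Filter (σ → R)) : Prop :=
  ∀ p : MvPolynomial σ R, (∀ᶠ y in l, eval y p = 0) → eval x p = 0

namespace ZariskiClusterPt

variable {x : σ → R} {l l' : Filter (σ → R)}

theorem mono (hx : ZariskiClusterPt x l) (h : l ≤ l') : ZariskiClusterPt x l' :=
  fun p hp => hx p (h hp)

theorem eval_eq (hx : ZariskiClusterPt x l) {p q : MvPolynomial σ R}
    (h : ∀ᶠ y in l, eval y p = eval y q) : eval x p = eval x q := by
  rw [← sub_eq_zero, ← map_sub]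
  refine hx _ (h.mono fun y hy => ?_)
  rw [map_sub, hy, sub_self]

theorem comp_of_map {l : Filter (τ → R)} {x : σ → R} {g : (τ → R) → σ → R}
    (hx : ZariskiClusterPt x (l.map g)) (e : τ → σ) (hg : ∀ y, g y ∘ e = y) :
    ZariskiClusterPt (x ∘ e) l := by
  intro p hp
  rw [← eval_rename]
  refine hx _ (eventually_map.2 (hp.mono fun y hy => ?_))
  rw [eval_rename, hg, hy]

end ZariskiClusterPt

variable {K : Type*} [Field K] [IsAlgClosed K] [Uncountable K] [Countable σ]

theorem exists_zariskiClusterPt (l : Filter (σ → K)) [l.NeBot] : ∃ x, ZariskiClusterPt x l := by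
  have hproper : eventuallyVanishingIdeal l ≠ ⊤ := by
    rw [Ideal.ne_top_iff_one]
    intro h
    obtain ⟨y, hy⟩ := Eventually.exists (show ∀ᶠ y in l, eval y (1 : MvPolynomial σ K) = 0 from h)
    exact one_ne_zero ((map_one _).symm.trans hy)
  obtain ⟨x, hx⟩ := zeroLocus_nonempty_of_ne_top hproper
  exact ⟨x, fun p hp => hx p hp⟩

-- Rabinowitsch's trick: the extra coordinate `inr i` is the inverse of `q i`.
theorem exists_zariskiClusterPt_eval_ne_zero {ι : Type*} [Countable ι] {l : Filter (σ → K)}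
    [l.NeBot] {q : ι → MvPolynomial σ K} (hq : ∀ i, ∀ᶠ y in l, eval y (q i) ≠ 0) :
    ∃ x, ZariskiClusterPt x l ∧ ∀ i, eval x (q i) ≠ 0 := by
  let g : (σ → K) → σ ⊕ ι → K := fun y => Sum.elim y fun i => (eval y (q i))⁻¹
  obtain ⟨x, hx⟩ := exists_zariskiClusterPt (l.map g)
  refine ⟨x ∘ Sum.inl, hx.comp_of_map Sum.inl fun _ => rfl, fun i hi => ?_⟩
  have hinv : eval x (rename Sum.inl (q i) * X (Sum.inr i)) = eval x 1 := by
    refine hx.eval_eq (eventually_map.2 ((hq i).mono fun y hy => ?_))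
    rw [map_mul, eval_rename, eval_X, map_one]
    exact mul_inv_cancel₀ hy
  rw [map_mul, eval_rename, hi, zero_mul, map_one] at hinv
  exact zero_ne_one hinv

end ZariskiClusterPt

section Constructible

variable {σ τ R : Type*} [CommRing R]

/-- A constructible subset of the affine space `σ → R`, where `σ` may be infinite: the counterpart
of `PolyConstructible`, which is the case `σ = Fin m`, `R = ℂ` by definition. -/
def IsPolyConstructible (C : Set (σ → R)) : Prop :=
  ∃ (k : ℕ) (P : Fin k → Finset (MvPolynomial σ R)) (Q : Fin k → MvPolynomial σ R),
    C = ⋃ i : Fin k, {x : σ → R | (∀ p ∈ P i, eval x p = 0) ∧ eval x (Q i) ≠ 0}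

theorem IsPolyConstructible.preimage_comp {C : Set (σ → R)} (hC : IsPolyConstructible C)
    (e : σ → τ) : IsPolyConstructible ((fun y : τ → R => y ∘ e) ⁻¹' C) := by
  classical
  obtain ⟨k, P, Q, rfl⟩ := hC
  refine ⟨k, fun i => (P i).image (rename e), fun i => rename e (Q i), ?_⟩
  ext y
  simp only [Set.mem_preimage, Set.mem_iUnion, Set.mem_ofPred_eq, Finset.forall_mem_image,
    eval_rename]

theorem exists_zariskiClusterPt_mem {K ι : Type*} [Field K] [IsAlgClosed K] [Uncountable K]
    [Countable σ] [Countable ι] {l : Filter (σ → K)} [l.NeBot] {C : ι → Set (σ → K)}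
    (hC : ∀ i, IsPolyConstructible (C i)) (hl : ∀ i, ∀ᶠ y in l, y ∈ C i) :
    ∃ x, ZariskiClusterPt x l ∧ ∀ i, x ∈ C i := by
  choose k P Q hPQ using hC
  let U := Ultrafilter.of l
  have hU : ↑U ≤ l := Ultrafilter.of_le l
  have hpiece : ∀ i, ∃ c, ∀ᶠ y in (U : Filter (σ → K)),
      (∀ p ∈ P i c, eval y p = 0) ∧ eval y (Q i c) ≠ 0 := by
    intro i
    rw [← Ultrafilter.eventually_exists_iff]
    filter_upwards [hU (hl i)] with y hy
    rw [hPQ i] at hy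
    exact Set.mem_iUnion.1 hy
  choose c hc using hpiece
  obtain ⟨x, hx, hxQ⟩ :=
    exists_zariskiClusterPt_eval_ne_zero fun i => (hc i).mono fun _ hy => hy.2
  refine ⟨x, hx.mono hU, fun i => ?_⟩
  rw [hPQ i]
  exact Set.mem_iUnion.2
    ⟨c i, fun p hp => hx p ((hc i).mono fun _ hy => hy.1 p hp), hxQ i⟩

end Constructible

section InverseSequence

variable {E : ℕ → Type*} (π : ∀ r, E (r + 1) → E r)

/-- The composite `π r ∘ π (r + 1) ∘ ⋯ ∘ π (r + k - 1)` in an inverse sequence of arbitrary types: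
the counterpart of `compMaps`. -/
def iterateTransition (r : ℕ) : ∀ k, E (r + k) → E r
  | 0 => id
  | k + 1 => fun x => iterateTransition r k (π (r + k) x)

theorem iterateTransition_eq_of_compatible {z : ∀ r, E r} {r k : ℕ}
    (hz : ∀ s < r + k, π s (z (s + 1)) = z s) : iterateTransition π r k (z (r + k)) = z r := by
  induction k with
  | zero => rfl
  | succ k ih =>
    change iterateTransition π r k (π (r + k) (z (r + k + 1))) = z r
    rw [hz (r + k) (by lia)]
    exact ih fun s hs => hz s (by lia)

theorem exists_compatible_upTo [∀ r, Nonempty (E r)] {T : ∀ r, Set (E r)}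
    (hmap : ∀ r, ∀ x ∈ T (r + 1), π r x ∈ T r) {N : ℕ} {x : E N} (hx : x ∈ T N) :
    ∃ z : ∀ r, E r, (∀ r ≤ N, z r ∈ T r) ∧ (∀ r < N, π r (z (r + 1)) = z r) ∧ z N = x := by
  let descend : ∀ r ≤ N, E r := fun r hr => Nat.decreasingInduction (fun r _ => π r) x hr
  have descend_step : ∀ r (hr : r < N), descend r hr.le = π r (descend (r + 1) hr) :=
    fun r hr => Nat.decreasingInduction_succ_left _ _ hr hr.le
  have descend_mem : ∀ r (hr : r ≤ N), descend r hr ∈ T r := by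
    intro r hr
    induction hr using Nat.decreasingInduction with
    | self => simpa only [descend, Nat.decreasingInduction_self] using hx
    | of_succ r hr ih => exact descend_step r hr ▸ hmap r _ ih
  refine ⟨fun r => if hr : r ≤ N then descend r hr else Classical.arbitrary _, ?_, ?_, ?_⟩
  · intro r hr
    simpa only [dif_pos hr] using descend_mem r hr
  · intro r hr
    simpa only [dif_pos hr.le, dif_pos (Nat.succ_le_of_lt hr)] using (descend_step r hr).symm
  · simp only [le_refl, dif_pos, descend, Nat.decreasingInduction_self]

theorem exists_compatible_upTo_extending [∀ r, Nonempty (E r)] {T : ∀ r, Set (E r)}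
    (hmap : ∀ r, ∀ x ∈ T (r + 1), π r x ∈ T r) {r₀ k : ℕ} {x : E (r₀ + k)} (hx : x ∈ T (r₀ + k)) :
    ∃ z : ∀ r, E r, (∀ r ≤ r₀ + k, z r ∈ T r) ∧ (∀ r < r₀ + k, π r (z (r + 1)) = z r) ∧
      z r₀ = iterateTransition π r₀ k x := by
  obtain ⟨z, hzT, hzπ, rfl⟩ := exists_compatible_upTo π hmap hx
  exact ⟨z, hzT, hzπ, (iterateTransition_eq_of_compatible π hzπ).symm⟩

theorem compMaps_eq_iterateTransition (n : ℕ → ℕ)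
    (π : ∀ r, (Fin (n (r + 1)) → ℂ) → Fin (n r) → ℂ) (r k : ℕ) :
    compMaps n π r k = iterateTransition (E := fun r => Fin (n r) → ℂ) π r k := by
  induction k with
  | zero => rfl
  | succ k ih => exact funext fun x => congrFun ih (π (r + k) x)

end InverseSequence

theorem exists_compatible_sequence_general {K : Type*} [Field K] [IsAlgClosed K] [Uncountable K]
    {σ : ℕ → Type*} [∀ r, Countable (σ r)] {T : ∀ r, Set (σ r → K)}
    (hT : ∀ r, IsPolyConstructible (T r)) {π : ∀ r, (σ (r + 1) → K) → (σ r → K)}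
    {P : ∀ r, σ r → MvPolynomial (σ (r + 1)) K} (hπ : ∀ r x i, π r x i = eval x (P r i))
    (hmap : ∀ r, ∀ x ∈ T (r + 1), π r x ∈ T r) {r₀ : ℕ} {j : σ r₀ → K}
    (hext : ∀ k, ∃ x ∈ T (r₀ + k), iterateTransition (E := fun r => σ r → K) π r₀ k x = j) :
    ∃ js : ∀ r, σ r → K, (∀ r, js r ∈ T r) ∧ (∀ r, π r (js (r + 1)) = js r) ∧ js r₀ = j := by
  choose x hxT hxj using hext
  choose z hzT hzπ hzj using fun k =>
    exists_compatible_upTo_extending (E := fun r => σ r → K) π hmap (hxT k)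
  let l : Filter ((Σ r, σ r) → K) := atTop.map fun k s => z k s.1 s.2
  have hlevel : ∀ r, ∀ᶠ k in atTop, r < r₀ + k := fun r =>
    (eventually_gt_atTop r).mono fun k hk => by lia
  obtain ⟨y, hy, hyT⟩ := exists_zariskiClusterPt_mem (l := l)
    (fun r => (hT r).preimage_comp (Sigma.mk r))
    (fun r => eventually_map.2 ((hlevel r).mono fun k hk => hzT k r hk.le))
  refine ⟨fun r => y ∘ Sigma.mk r, hyT, fun r => funext fun a => ?_, funext fun a => ?_⟩
  · have hstep : eval y (rename (Sigma.mk (r + 1)) (P r a)) = eval y (X ⟨r, a⟩) := by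
      refine hy.eval_eq (eventually_map.2 ((hlevel r).mono fun k hk => ?_))
      rw [eval_rename, eval_X, ← congrFun (hzπ k r hk) a, hπ]
      rfl
    rwa [eval_rename, ← hπ, eval_X] at hstep
  · have hbase : eval y (X ⟨r₀, a⟩) = eval y (C (j a)) := by
      refine hy.eval_eq (eventually_map.2 (.of_forall fun k => ?_))
      rw [eval_X, eval_C, hzj, hxj]
    rwa [eval_X, eval_C] at hbase

/-- Given a compatible family of constructible sets `T_r ⊆ ℂ^{n_r}` with
polynomial transition maps `π_r : ℂ^{n_{r+1}} → ℂ^{n_r}`, any point `j ∈ T_{r₀}` admitting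
arbitrary extensions (i.e. lying in the image of `T_{r₀+k}` for every `k`) belongs to a full
compatible sequence `(j_r)_{r ≥ 0}` with `j_r ∈ T_r` and `π_r (j_{r+1}) = j_r` for all `r`. -/
theorem exists_compatible_sequence
    (n : ℕ → ℕ) (T : ∀ r : ℕ, Set (Fin (n r) → ℂ))
    (hT : ∀ r, PolyConstructible (T r))
    (π : ∀ r : ℕ, (Fin (n (r + 1)) → ℂ) → (Fin (n r) → ℂ))
    (P : ∀ r : ℕ, Fin (n r) → MvPolynomial (Fin (n (r + 1))) ℂ)
    (hπ : ∀ r x i, π r x i = MvPolynomial.eval x (P r i))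
    (hmap : ∀ r, ∀ x ∈ T (r + 1), π r x ∈ T r)
    (r₀ : ℕ) (j : Fin (n r₀) → ℂ) (hj : j ∈ T r₀)
    (hext : ∀ k : ℕ, ∃ x ∈ T (r₀ + k), compMaps n π r₀ k x = j) :
    ∃ js : ∀ r : ℕ, Fin (n r) → ℂ,
      (∀ r, js r ∈ T r) ∧ (∀ r, π r (js (r + 1)) = js r) ∧ js r₀ = j := by
  have : Uncountable ℂ := Set.not_countable_univ_iff.1 not_countable_complex
  exact exists_compatible_sequence_general hT hπ hmap fun k =>
    compMaps_eq_iterateTransition n π r₀ k ▸ hext k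
end

section
/- Let n ≥ 1 and let C₀ ⊇ C₁ ⊇ C₂ ⊇ ⋯ be a decreasing sequence of nonempty constructible subsets of ℂⁿ. Then the intersection ⋂_{j ∈ ℕ} C_j is nonempty. -/
/-!
Let `K` be an uncountable algebraically closed field. Finitely many polynomials define a
constructible set, so fewer than `#K` constructible subsets of `K ^ σ` are all defined over a common
subfield `k` with `#k < #K`. They are then the preimages of constructible subsets of
`Spec k[X_i : i ∈ σ]` under the map sending a point `x` to the prime of the polynomials over `k`
vanishing at `x`. Since `K` has transcendence degree `#K` over `k`, it contains a copy of every
quotient `k[X] ⧸ p` by a prime, so that map is surjective, and the problem moves to the spectrum,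
where it is the compactness of the constructible topology.
-/

open Cardinal PrimeSpectrum MvPolynomial Topology

universe u v w

section Embedding

theorem injective_algHom_of_isAlgebraic {R A B : Type*} [CommRing R] [CommRing A] [IsDomain A]
    [CommRing B] [Algebra R A] [Algebra.IsAlgebraic R A] [Algebra R B] [FaithfulSMul R B]
    (f : A →ₐ[R] B) : Function.Injective f := by
  have hker : (RingHom.ker f).comap (algebraMap R A) = ⊥ := by
    ext r
    simp [RingHom.mem_ker]
  refine (injective_iff_map_eq_zero f).2 fun a ha ↦ by_contra fun ha0 ↦ ?_
  exact Ideal.comap_ne_bot_of_algebraic_mem ha0 ha (Algebra.IsAlgebraic.isAlgebraic (R := R) a) hker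

variable {R : Type*} {A : Type v} {K : Type u} [CommRing R] [CommRing A] [IsDomain A] [Field K]
  [IsAlgClosed K] [Algebra R A] [Algebra R K]

theorem exists_injective_algHom_of_isTranscendenceBasis {ι : Type*} {x : ι → A} {y : ι → K}
    (hx : IsTranscendenceBasis R x) (hy : AlgebraicIndependent R y) :
    ∃ f : A →ₐ[R] K, Function.Injective f := by
  have : Nontrivial R := (algebraMap R K).domain_nontrivial
  let φ : Algebra.adjoin R (Set.range x) →ₐ[R] K := (aeval y).comp hx.1.aevalEquiv.symm.toAlgHom
  have hφ : Function.Injective φ :=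
    Function.Injective.comp (g := aeval (R := R) y) hy hx.1.aevalEquiv.symm.injective
  algebraize [φ.toRingHom]
  have := hx.isAlgebraic
  have : FaithfulSMul (Algebra.adjoin R (Set.range x)) K :=
    (faithfulSMul_iff_algebraMap_injective _ _).2 hφ
  have : IsScalarTower R (Algebra.adjoin R (Set.range x)) K :=
    .of_algebraMap_eq' φ.comp_algebraMap.symm
  have : Nontrivial (Algebra.adjoin R (Set.range x)) := φ.toRingHom.domain_nontrivial
  let f : A →ₐ[Algebra.adjoin R (Set.range x)] K := IsAlgClosed.lift
  exact ⟨f.restrictScalars R, injective_algHom_of_isAlgebraic f⟩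

theorem exists_injective_algHom_of_lift_trdeg_le [FaithfulSMul R A] [FaithfulSMul R K]
    (h : lift.{u} (Algebra.trdeg R A) ≤ lift.{v} (Algebra.trdeg R K)) :
    ∃ f : A →ₐ[R] K, Function.Injective f := by
  have : Nontrivial R := (algebraMap R K).domain_nontrivial
  obtain ⟨s, hs⟩ := exists_isTranscendenceBasis R A
  obtain ⟨t, ht⟩ := exists_isTranscendenceBasis R K
  rw [← hs.cardinalMk_eq_trdeg, ← ht.cardinalMk_eq_trdeg, lift_mk_le'] at h
  obtain ⟨e⟩ := h
  exact exists_injective_algHom_of_isTranscendenceBasis hs (ht.1.comp e e.injective)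

end Embedding

theorem trdeg_eq_cardinalMk_of_lt {R K : Type u} [CommRing R] [Field K] [IsAlgClosed K]
    [Uncountable K] [Algebra R K] [FaithfulSMul R K] (h : #R < #K) : Algebra.trdeg R K = #K := by
  have : Nontrivial R := (algebraMap R K).domain_nontrivial
  obtain ⟨t, ht⟩ := exists_isTranscendenceBasis R K
  rw [← ht.cardinalMk_eq_trdeg]
  refine (mk_set_le t).antisymm ?_
  simpa [h.not_ge, aleph0_lt_mk.not_ge] using
    IsAlgClosed.cardinal_le_max_transcendence_basis' _ ht

section PointToPoint

theorem surjective_pointToPoint {k : Type w} {K : Type u} {σ : Type v} [Field k] [Field K]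
    [Algebra k K] [IsAlgClosed K] (h : lift.{u} #σ ≤ lift.{v} (Algebra.trdeg k K)) :
    Function.Surjective (pointToPoint : (σ → K) → PrimeSpectrum (MvPolynomial σ k)) := by
  intro p
  have hp : lift.{u} (Algebra.trdeg k (MvPolynomial σ k ⧸ p.asIdeal)) ≤
      lift.{max v w} (Algebra.trdeg k K) :=
    calc lift.{u} (Algebra.trdeg k (MvPolynomial σ k ⧸ p.asIdeal))
      _ ≤ lift.{u} (Algebra.trdeg k (MvPolynomial σ k)) :=
        lift_le.2 <| trdeg_le_of_surjective (Ideal.Quotient.mkₐ k p.asIdeal)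
          Ideal.Quotient.mk_surjective
      _ = lift.{max u w} #σ := by rw [MvPolynomial.trdeg_of_isDomain, lift_lift]
      _ ≤ lift.{max v w} (Algebra.trdeg k K) := by simpa using lift_le.{w}.2 h
  have : FaithfulSMul k (MvPolynomial σ k ⧸ p.asIdeal) :=
    (faithfulSMul_iff_algebraMap_injective _ _).2 (algebraMap k _).injective
  obtain ⟨f, hf⟩ := exists_injective_algHom_of_lift_trdeg_le hp
  -- The images of the variables under `k[X] → k[X] ⧸ p ↪ K` form a generic point of `V(p)`.
  let g := f.comp (Ideal.Quotient.mkₐ k p.asIdeal)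
  refine ⟨g ∘ X, PrimeSpectrum.ext ?_⟩
  ext q
  change q ∈ vanishingIdeal k {g ∘ X} ↔ q ∈ p.asIdeal
  rw [mem_vanishingIdeal_singleton_iff, ← aeval_unique g, ← Ideal.Quotient.eq_zero_iff_mem]
  exact map_eq_zero_iff f hf

theorem comap_map_pointToPoint {k K σ : Type*} [Field k] [Field K] [Algebra k K] (x : σ → K) :
    comap (map (algebraMap k K)) (pointToPoint x) =
      (pointToPoint x : PrimeSpectrum (MvPolynomial σ k)) := by
  ext p
  change map _ p ∈ vanishingIdeal K _ ↔ p ∈ vanishingIdeal k _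
  simp [aeval_map_algebraMap]

end PointToPoint

section ConstructibleTopology

variable {X : Type*} [TopologicalSpace X] [CompactSpace X]

theorem isClopen_ofTopology_preimage {s : Set X} (hs : IsConstructible s) :
    IsClopen (WithTopology.ofTopology ⁻¹' s : Set (WithConstructibleTopology X)) := by
  induction hs using IsConstructible.empty_union_induction with
  | open_retrocompact U hU hUc =>
    constructor
    · rw [← isOpen_compl_iff, ← Set.preimage_compl, WithConstructibleTopology.isOpen_iff]
      have hUcc : IsCompact Uᶜᶜ := by simpa only [compl_compl] using hUc.isCompact
      exact hUcc.isOpen_constructibleTopology_of_isClosed hU.isClosed_compl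
    · rw [WithConstructibleTopology.isOpen_iff]
      exact hUc.isCompact.isOpen_constructibleTopology_of_isOpen hU
  | union s _ t _ hs ht => exact hs.union ht
  | compl s _ hs => exact hs.compl

theorem nonempty_iInter_of_isConstructible {ι : Type*} [QuasiSober X] [PrespectralSpace X]
    [QuasiSeparatedSpace X] {D : ι → Set X} (hD : ∀ i, IsConstructible (D i))
    (hfin : ∀ t : Finset ι, (⋂ i ∈ t, D i).Nonempty) : (⋂ i, D i).Nonempty := by
  have hsurj : Function.Surjective (WithTopology.ofTopology (t := constructibleTopology X)) :=
    WithTopology.ofTopology_surjective _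
  rw [← hsurj.nonempty_preimage, Set.preimage_iInter]
  refine CompactSpace.iInter_nonempty (fun i ↦ (isClopen_ofTopology_preimage (hD i)).1) fun t ↦ ?_
  simpa only [Set.preimage_iInter] using hsurj.nonempty_preimage.2 (hfin t)

end ConstructibleTopology

section FieldOfDefinition

variable {σ B : Type*} [CommSemiring B]

theorem exists_basicConstructibleSetData_map_eq {A : Type*} [CommSemiring A] {φ : A →+* B}
    {C : BasicConstructibleSetData (MvPolynomial σ B)} (hf : (C.f.coeffs : Set B) ⊆ Set.range φ)
    (hg : ∀ j, ((C.g j).coeffs : Set B) ⊆ Set.range φ) :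
    ∃ C' : BasicConstructibleSetData (MvPolynomial σ A), C'.map (map φ) = C := by
  obtain ⟨f, hf⟩ := mem_range_map_iff_coeffs_subset.2 hf
  choose g hg using fun j ↦ mem_range_map_iff_coeffs_subset.2 (hg j)
  refine ⟨⟨f, C.n, g⟩, ?_⟩
  simp [BasicConstructibleSetData.map, hf, hg, Function.comp_def]

theorem exists_finset_forall_constructibleSetData_map_eq
    (S : ConstructibleSetData (MvPolynomial σ B)) :
    ∃ s : Finset B, ∀ {A : Type u} [CommSemiring A] (φ : A →+* B), (s : Set B) ⊆ Set.range φ →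
      ∃ T : ConstructibleSetData (MvPolynomial σ A), T.map (map φ) = S := by
  classical
  refine ⟨S.biUnion fun C ↦ C.f.coeffs ∪ Finset.univ.biUnion fun j ↦ (C.g j).coeffs,
    fun φ hφ ↦ ?_⟩
  have hrange : (S : Set (BasicConstructibleSetData (MvPolynomial σ B))) ⊆
      BasicConstructibleSetData.map (map φ) '' Set.univ := by
    intro C hC
    simp only [Finset.coe_biUnion, Finset.coe_union, Set.iUnion_subset_iff,
      Set.union_subset_iff] at hφ
    rw [Set.image_univ]
    exact exists_basicConstructibleSetData_map_eq (hφ C hC).1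
      fun j ↦ (hφ C hC).2 j (Finset.mem_coe.2 (Finset.mem_univ j))
  obtain ⟨T, -, hT⟩ := Finset.subset_set_image_iff.1 hrange
  exact ⟨T, by simpa [ConstructibleSetData.map] using hT⟩

end FieldOfDefinition

section IsConstructibleOver

variable {σ k K : Type*} [Field k] [Field K] [Algebra k K]

variable (k) in
/-- A set of `K`-points of affine space is constructible over `k` if it is a finite Boolean
combination of zero loci of polynomials with coefficients in `k`. This is encoded as being the set
of `K`-points of a constructible subset of the scheme-theoretic affine space over `k`, a point
`x : σ → K` lying over the prime of the polynomials over `k` that vanish at `x`. -/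
def IsConstructibleOver (C : Set (σ → K)) : Prop :=
  ∃ D : Set (PrimeSpectrum (MvPolynomial σ k)), IsConstructible D ∧ pointToPoint ⁻¹' D = C

theorem IsConstructibleOver.exists_finset {C : Set (σ → K)} (hC : IsConstructibleOver K C) :
    ∃ s : Finset K, ∀ k : Subfield K, (s : Set K) ⊆ k → IsConstructibleOver k C := by
  obtain ⟨D, hD, rfl⟩ := hC
  obtain ⟨S, rfl⟩ := exists_constructibleSetData_iff.2 hD
  obtain ⟨s, hs⟩ := exists_finset_forall_constructibleSetData_map_eq S
  refine ⟨s, fun k hk ↦ ?_⟩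
  obtain ⟨T, rfl⟩ := hs k.subtype (by simpa using hk)
  refine ⟨T.toSet, T.isConstructible_toSet, ?_⟩
  ext x
  rw [ConstructibleSetData.toSet_map, Set.mem_preimage, ← comap_map_pointToPoint]
  rfl

theorem exists_subfield_isConstructibleOver {K : Type u} {ι : Type w} [Field K]
    {C : ι → Set (σ → K)} (hC : ∀ i, IsConstructibleOver K (C i)) :
    ∃ k : Subfield K, lift.{w} #k ≤ max (lift.{u} #ι) ℵ₀ ∧ ∀ i, IsConstructibleOver k (C i) := by
  choose s hs using fun i ↦ (hC i).exists_finset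
  refine ⟨.closure (⋃ i, s i), ?_, fun i ↦ hs i _ <|
    (Set.subset_iUnion (fun i ↦ (s i : Set K)) i).trans Subfield.subset_closure⟩
  have hunion : lift.{w} #(⋃ i, (s i : Set K)) ≤ max (lift.{u} #ι) ℵ₀ :=
    calc lift.{w} #(⋃ i, (s i : Set K))
      _ ≤ lift.{u} #ι * ⨆ i, lift.{w} #(s i : Set K) := mk_iUnion_le_lift _
      _ ≤ lift.{u} #ι * ℵ₀ := by
        gcongr
        exact ciSup_le' fun i ↦ by simp
      _ ≤ max (lift.{u} #ι) ℵ₀ := by simpa using mul_le_max (lift.{u} #ι) ℵ₀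
  calc lift.{w} #(Subfield.closure (⋃ i, (s i : Set K)))
    _ ≤ max (lift.{w} #(⋃ i, (s i : Set K))) ℵ₀ := by
      simpa using lift_le.{w}.2 (Subfield.cardinalMk_closure_le_max (⋃ i, (s i : Set K)))
    _ ≤ max (lift.{u} #ι) ℵ₀ := max_le hunion (le_max_right _ _)

theorem IsConstructibleOver.nonempty_iInter {k : Type w} {K : Type u} {σ : Type v} {ι : Type*}
    [Field k] [Field K] [Algebra k K] [IsAlgClosed K]
    (h : lift.{u} #σ ≤ lift.{v} (Algebra.trdeg k K))
    {C : ι → Set (σ → K)} (hC : ∀ i, IsConstructibleOver k (C i))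
    (hfin : ∀ t : Finset ι, (⋂ i ∈ t, C i).Nonempty) : (⋂ i, C i).Nonempty := by
  choose D hD hDC using hC
  obtain rfl : (fun i ↦ pointToPoint ⁻¹' D i) = C := funext hDC
  rw [← Set.preimage_iInter, (surjective_pointToPoint h).nonempty_preimage]
  refine nonempty_iInter_of_isConstructible hD fun t ↦ ?_
  rw [← (surjective_pointToPoint h).nonempty_preimage]
  simpa only [Set.preimage_iInter] using hfin t

end IsConstructibleOver

theorem isConstructible_zeroLocus {R : Type*} [CommSemiring R] {s : Set R} (hs : s.Finite) :
    IsConstructible (zeroLocus s) :=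
  isConstructible_compl.1 <|
    (isRetrocompact_zeroLocus_compl hs).isConstructible (isClosed_zeroLocus s).isOpen_compl

theorem PolyConstructible.isConstructibleOver {m : ℕ} {C : Set (Fin m → ℂ)}
    (hC : PolyConstructible C) : IsConstructibleOver ℂ C := by
  obtain ⟨n, P, Q, rfl⟩ := hC
  refine ⟨⋃ i, zeroLocus (P i) ∩ basicOpen (Q i),
    .iUnion fun i ↦ (isConstructible_zeroLocus (P i).finite_toSet).inter
      ((isCompact_basicOpen _).isConstructible (basicOpen _).isOpen), ?_⟩
  ext x
  simp [Set.subset_def, pointToPoint]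

theorem nonempty_iInter_of_decreasing_constructible_general {K : Type u} {σ : Type v} {ι : Type w}
    [Field K] [IsAlgClosed K] [Uncountable K] (hσ : lift.{u} #σ ≤ lift.{v} #K)
    (hι : lift.{u} #ι < lift.{w} #K) {C : ι → Set (σ → K)} (hC : ∀ i, IsConstructibleOver K (C i))
    (hfin : ∀ t : Finset ι, (⋂ i ∈ t, C i).Nonempty) : (⋂ i, C i).Nonempty := by
  obtain ⟨k, hk, hCk⟩ := exists_subfield_isConstructibleOver hC
  have hkK : #k < #K := lift_lt.1 (hk.trans_lt (max_lt hι (by simp)))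
  refine IsConstructibleOver.nonempty_iInter ?_ hCk hfin
  rwa [trdeg_eq_cardinalMk_of_lt hkK]

/-- Let `n ≥ 1` and let `C₀ ⊇ C₁ ⊇ ⋯` be a decreasing sequence of nonempty
constructible subsets of `ℂⁿ`. Then `⋂ⱼ Cⱼ` is nonempty. -/
theorem nonempty_iInter_of_decreasing_constructible
    (n : ℕ) (hn : 1 ≤ n) (C : ℕ → Set (Fin n → ℂ))
    (hcon : ∀ j, PolyConstructible (C j))
    (hne : ∀ j, (C j).Nonempty)
    (hdec : ∀ j, C (j + 1) ⊆ C j) :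
    (⋂ j : ℕ, C j).Nonempty := by
  have : Uncountable ℂ := aleph0_lt_mk_iff.1 (by simp [aleph0_lt_continuum])
  refine nonempty_iInter_of_decreasing_constructible_general (by simp [(nat_lt_continuum n).le])
    (by simp [aleph0_lt_continuum])
    (fun j ↦ (hcon j).isConstructibleOver) fun t ↦ ?_
  exact (hne (t.sup id)).mono <| Set.subset_iInter₂ fun j hj ↦
    antitone_nat_of_succ_le hdec (t.le_sup (f := id) hj)
end

section
/- Let n ≥ 1 and let (C_j)_{j ∈ ℕ} be a countable family of constructible subsets of ℂⁿ. Then the closure of ⋂_{j ∈ ℕ} C_j in the standard (Euclidean) topology on ℂⁿ is an algebraic set: there exist finitely many polynomials q₁,…,q_s ∈ ℂ[X₁,…,X_n] such that this closure equals { x ∈ ℂⁿ : q₁(x) = ⋯ = q_s(x) = 0 }. -/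
/-!
The closure of `S = ⋂ j, C j` is the zero locus of the vanishing ideal `I` of `S`. A point of that
zero locus lies on `Z(P)` for some minimal prime `P` of `I`, and minimality makes `P` the vanishing
ideal of `S ∩ Z(P)`; hence each `C j`, being constructible, contains the points of `Z(P)` outside a
proper hypersurface section `q j = 0`. By the Baire category theorem these points are simultaneously
generic for all `j` on a dense subset of the complete space `Z(P)`, provided each `{q j ≠ 0}` is
dense in `Z(P)` for the norm topology.

That density comes from Noether normalization: `Z(P)` has a finite projection to an affine space,
where the complement of a hypersurface is dense, and the projection is an open map because the roots
of a monic polynomial depend continuously on its coefficients.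
-/

open Filter MvPolynomial Topology

/-- Constructible subsets of affine space over an arbitrary field, presented by finitely many
finite systems `p = 0, q ≠ 0`; over `ℂ` this unfolds to the same formula as `PolyConstructible`. -/
def ZariskiConstructible {k σ : Type*} [Field k] (C : Set (σ → k)) : Prop :=
  ∃ (r : ℕ) (P : Fin r → Finset (MvPolynomial σ k)) (Q : Fin r → MvPolynomial σ k),
    C = ⋃ i, {x | (∀ p ∈ P i, eval x p = 0) ∧ eval x (Q i) ≠ 0}

section VanishingIdeal

variable {k K σ : Type*} [Field k] [Field K] [Algebra k K]

theorem exists_vanishingIdeal_le_of_vanishingIdeal_biUnion_le {ι : Type*} {s : Finset ι}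
    {T : ι → Set (σ → K)} {P : Ideal (MvPolynomial σ k)} (hP : P.IsPrime)
    (h : vanishingIdeal k (⋃ i ∈ s, T i) ≤ P) : ∃ i ∈ s, vanishingIdeal k (T i) ≤ P := by
  suffices hinf : s.inf (fun i => vanishingIdeal k (T i)) ≤ vanishingIdeal k (⋃ i ∈ s, T i) from
    hP.inf_le'.mp (hinf.trans h)
  intro p hp x hx
  obtain ⟨i, hi, hxi⟩ := Set.mem_iUnion₂.mp hx
  exact Finset.inf_le (f := fun i => vanishingIdeal k (T i)) hi hp x hxi

theorem exists_minimalPrimes_mem_zeroLocus {I : Ideal (MvPolynomial σ k)} {x : σ → K}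
    (hx : x ∈ zeroLocus K I) : ∃ P ∈ I.minimalPrimes, x ∈ zeroLocus K P := by
  have hI : I ≤ vanishingIdeal k {x} :=
    le_zeroLocus_iff_le_vanishingIdeal.mp (Set.singleton_subset_iff.mpr hx)
  obtain ⟨P, hP, hPx⟩ := Ideal.exists_minimalPrimes_le hI
  exact ⟨P, hP, fun p hp => hPx hp x rfl⟩

theorem vanishingIdeal_inter_zeroLocus_of_mem_minimalPrimes [Finite σ] {S : Set (σ → K)}
    {P : Ideal (MvPolynomial σ k)} (hP : P ∈ (vanishingIdeal k S).minimalPrimes) :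
    vanishingIdeal k (S ∩ zeroLocus K P) = P := by
  have hfin := Ideal.finite_minimalPrimes_of_isNoetherianRing _ (vanishingIdeal k S)
  have hcover : S ⊆ ⋃ P' ∈ hfin.toFinset, S ∩ zeroLocus K P' := fun x hx => by
    obtain ⟨P', hP', hxP'⟩ :=
      exists_minimalPrimes_mem_zeroLocus (zeroLocus_vanishingIdeal_le (k := k) S hx)
    exact Set.mem_biUnion (hfin.mem_toFinset.mpr hP') ⟨hx, hxP'⟩
  have hle (P' : Ideal (MvPolynomial σ k)) : P' ≤ vanishingIdeal k (S ∩ zeroLocus K P') :=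
    le_zeroLocus_iff_le_vanishingIdeal.mp Set.inter_subset_right
  obtain ⟨P', hP', hP'P⟩ := exists_vanishingIdeal_le_of_vanishingIdeal_biUnion_le hP.1.1
    ((vanishingIdeal_anti_mono hcover).trans hP.1.2)
  have hPP' : P ≤ P' := hP.2 (hfin.mem_toFinset.mp hP').1 ((hle P').trans hP'P)
  obtain rfl : P = P' := hPP'.antisymm ((hle P').trans hP'P)
  exact hP'P.antisymm (hle P)

theorem exists_zeroLocus_vanishingIdeal_sdiff_subset {C T : Set (σ → k)}
    (hC : ZariskiConstructible C) (hTC : T ⊆ C) (hT : (vanishingIdeal k T).IsPrime) :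
    ∃ q ∉ vanishingIdeal k T,
      ∀ x ∈ zeroLocus k (vanishingIdeal k T), eval x q ≠ 0 → x ∈ C := by
  obtain ⟨r, E, Q, rfl⟩ := hC
  set D : Fin r → Set (σ → k) := fun i => {x | (∀ p ∈ E i, eval x p = 0) ∧ eval x (Q i) ≠ 0}
  have hcover : T ⊆ ⋃ i ∈ Finset.univ, T ∩ D i := fun x hx => by
    simpa [hx] using hTC hx
  obtain ⟨i, -, hi⟩ := exists_vanishingIdeal_le_of_vanishingIdeal_biUnion_le hT
    (vanishingIdeal_anti_mono hcover)
  refine ⟨Q i, fun hQ => hT.one_notMem (hi fun x hx => (hx.2.2 (hQ x hx.1)).elim),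
    fun x hx hxQ => Set.mem_iUnion.mpr ⟨i, fun p hp => ?_, hxQ⟩⟩
  exact hx p (hi fun x hx => hx.2.1 p hp)

theorem exists_eval_eq_zero_and_eval_ne_zero {s : Set (σ → k)} (hs : s.Finite) {x : σ → k}
    (hx : x ∉ s) : ∃ h : MvPolynomial σ k, (∀ a ∈ s, eval a h = 0) ∧ eval x h ≠ 0 := by
  have hsep : ∀ a : s, ∃ i, x i ≠ (a : σ → k) i := fun a =>
    Function.ne_iff.mp fun h => hx (h ▸ a.2)
  choose i hi using hsep
  have := hs.fintype
  refine ⟨∏ a : s, (X (i a) - C ((a : σ → k) (i a))), fun a ha => ?_, ?_⟩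
  · rw [map_prod]
    exact Finset.prod_eq_zero (Finset.mem_univ ⟨a, ha⟩) (by simp)
  · simpa [map_prod, Finset.prod_ne_zero_iff, sub_eq_zero] using fun a ha => hi ⟨a, ha⟩

theorem exists_fin_zeroLocus_eq [Finite σ] (I : Ideal (MvPolynomial σ k)) :
    ∃ (s : ℕ) (q : Fin s → MvPolynomial σ k),
      zeroLocus K I = {x | ∀ i, aeval x (q i) = 0} := by
  obtain ⟨s, q, rfl⟩ := Submodule.fg_iff_exists_fin_generating_family.mp
    (IsNoetherian.noetherian I)
  exact ⟨s, q, by simp [← Ideal.span.eq_1, zeroLocus_span]⟩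

end VanishingIdeal

section IntegralExtension

variable {A B K : Type*} [CommRing A] [CommRing B] [Algebra B A] [Algebra.IsIntegral B A]
  [Field K] [IsAlgClosed K]

theorem exists_ringHom_comp_algebraMap_eq {φ : B →+* K}
    (hφ : RingHom.ker (algebraMap B A) ≤ RingHom.ker φ) :
    ∃ ψ : A →+* K, ψ.comp (algebraMap B A) = φ := by
  have : (RingHom.ker φ).IsPrime := RingHom.ker_isPrime φ
  obtain ⟨Q, -, hQ, hQφ⟩ := Ideal.exists_ideal_over_prime_of_isIntegral (RingHom.ker φ) ⊥ hφ
  have : Q.LiesOver (RingHom.ker φ) := ⟨hQφ.symm⟩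
  let _ : Algebra (B ⧸ RingHom.ker φ) K := (RingHom.kerLift φ).toAlgebra
  have : Module.IsTorsionFree (B ⧸ RingHom.ker φ) K :=
    Module.isTorsionFree_iff_algebraMap_injective.mpr (RingHom.kerLift_injective φ)
  have : Module.IsTorsionFree (B ⧸ RingHom.ker φ) (A ⧸ Q) :=
    Module.isTorsionFree_iff_faithfulSMul.mpr inferInstance
  let ψ : A ⧸ Q →ₐ[B ⧸ RingHom.ker φ] K := IsAlgClosed.lift
  exact ⟨ψ.toRingHom.comp (Ideal.Quotient.mk Q),
    RingHom.ext fun b => ψ.commutes (Ideal.Quotient.mk _ b)⟩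

-- Since `B` is integrally closed, `B[X] → A, X ↦ h` has kernel `(minpoly B h)`, so evaluation of
-- `B[X]` at `(φ, t)` kills that kernel and extends along the integral extension `B[X] → A`.
theorem exists_ringHom_comp_algebraMap_eq_and_apply_eq [IsDomain A] [IsDomain B]
    [FaithfulSMul B A] [IsIntegrallyClosed B] {φ : B →+* K} {h : A} {t : K}
    (ht : (minpoly B h).eval₂ φ t = 0) :
    ∃ ψ : A →+* K, ψ.comp (algebraMap B A) = φ ∧ ψ h = t := by
  let ev : Polynomial B →+* A := (Polynomial.aeval h).toRingHom
  let _ : Algebra (Polynomial B) A := ev.toAlgebra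
  have : IsScalarTower B (Polynomial B) A :=
    .of_algebraMap_eq fun b => (Polynomial.aeval_C h b).symm
  have : Algebra.IsIntegral (Polynomial B) A := Algebra.IsIntegral.tower_top B
  have hker : RingHom.ker (algebraMap (Polynomial B) A) ≤
      RingHom.ker (Polynomial.eval₂RingHom φ t) := fun f hf =>
    Polynomial.eval₂_eq_zero_of_dvd_of_eval₂_eq_zero φ t
      (minpoly.isIntegrallyClosed_dvd (Algebra.IsIntegral.isIntegral h) hf) ht
  obtain ⟨ψ, hψ⟩ := exists_ringHom_comp_algebraMap_eq hker
  have hψ_ev (f : Polynomial B) : ψ (Polynomial.aeval h f) = f.eval₂ φ t := DFunLike.congr_fun hψ f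
  exact ⟨ψ, RingHom.ext fun b => by simpa using hψ_ev (.C b), by simpa using hψ_ev .X⟩

end IntegralExtension

section ContinuityOfRoots

theorem finite_setOf_eval₂_eq_zero {R K : Type*} [Semiring R] [Field K] (φ : R →+* K)
    {F : Polynomial R} (hF : F.Monic) : {t | F.eval₂ φ t = 0}.Finite := by
  simpa only [Polynomial.IsRoot, Polynomial.eval_map] using
    Polynomial.finite_setOfPred_isRoot (hF.map φ).ne_zero

variable {K : Type*} [NormedField K]

theorem exists_root_norm_sub_lt_mul_max {f g : Polynomial K} (hf : f.Monic) (hg : g.Monic)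
    (hdeg : g.natDegree = f.natDegree) (hsplits : g.Splits) {a : K} (ha : f.eval a = 0) {δ : ℝ}
    (hδ : 0 < δ)
    (hcoeff : ∀ i, ‖g.coeff i - f.coeff i‖ < δ ^ f.natDegree / (f.natDegree + 1)) :
    ∃ b, g.eval b = 0 ∧ ‖a - b‖ < δ * max ‖a‖ 1 := by
  have hdeg_ne : f.natDegree ≠ 0 := fun h => by
    simp [hf.natDegree_eq_zero.mp h] at ha
  obtain ⟨b, hb, hab⟩ := Polynomial.exists_roots_norm_sub_lt_of_norm_coeff_sub_lt
    (by positivity) ha hf hg hdeg hcoeff hsplits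
  rw [mul_div_cancel₀ _ (by positivity), Real.pow_rpow_inv_natCast hδ.le hdeg_ne] at hab
  exact ⟨b, (Polynomial.mem_roots'.mp hb).2, hab⟩

variable {R X : Type*} [Semiring R] [TopologicalSpace X] {φ : X → R →+* K} {y : X}

theorem eventually_forall_norm_coeff_map_sub_lt (hφ : ∀ r, ContinuousAt (fun z => φ z r) y)
    (F : Polynomial R) {ε : ℝ} (hε : 0 < ε) :
    ∀ᶠ z in 𝓝 y, ∀ i, ‖(F.map (φ z)).coeff i - (F.map (φ y)).coeff i‖ < ε := by
  have hsupp : ∀ᶠ z in 𝓝 y, ∀ i ∈ F.support, dist (φ z (F.coeff i)) (φ y (F.coeff i)) < ε :=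
    F.support.eventually_all.mpr fun i _ => (hφ (F.coeff i)).eventually (Metric.ball_mem_nhds _ hε)
  filter_upwards [hsupp] with z hz i
  by_cases hi : i ∈ F.support
  · simpa [dist_eq_norm] using hz i hi
  · simpa [Polynomial.notMem_support_iff.mp hi] using hε

variable [IsAlgClosed K]

theorem eventually_exists_root_mem (hφ : ∀ r, ContinuousAt (fun z => φ z r) y) {F : Polynomial R}
    (hF : F.Monic) {c : K} (hc : F.eval₂ (φ y) c = 0) {U : Set K} (hU : U ∈ 𝓝 c) :
    ∀ᶠ z in 𝓝 y, ∃ t ∈ U, F.eval₂ (φ z) t = 0 := by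
  obtain ⟨ε, hε, hεU⟩ := Metric.mem_nhds_iff.mp hU
  have hδ : 0 < ε / max ‖c‖ 1 := by positivity
  have hcoeff := eventually_forall_norm_coeff_map_sub_lt hφ F
    (ε := (ε / max ‖c‖ 1) ^ (F.map (φ y)).natDegree / ((F.map (φ y)).natDegree + 1)) (by positivity)
  filter_upwards [hcoeff] with z hz
  obtain ⟨t, ht, hct⟩ := exists_root_norm_sub_lt_mul_max (hF.map (φ y)) (hF.map (φ z))
    (by simp [hF.natDegree_map]) (IsAlgClosed.splits _) (by rwa [Polynomial.eval_map]) hδ hz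
  rw [div_mul_cancel₀ _ (by positivity), ← dist_eq_norm, dist_comm] at hct
  exact ⟨t, hεU hct, by rwa [Polynomial.eval_map] at ht⟩

theorem eventually_forall_root_mem (hφ : ∀ r, ContinuousAt (fun z => φ z r) y)
    {F : Polynomial R} (hF : F.Monic) {U : Set K} (hU : U ∈ 𝓝ˢ {t | F.eval₂ (φ y) t = 0}) :
    ∀ᶠ z in 𝓝 y, ∀ t, F.eval₂ (φ z) t = 0 → t ∈ U := by
  have hfin := finite_setOf_eval₂_eq_zero (φ y) hF
  obtain ⟨ε, hε, hεU⟩ := (Metric.hasBasis_nhdsSet_thickening hfin.isCompact).mem_iff.mp hU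
  obtain ⟨M, hM, hroots⟩ := hfin.isBounded.exists_pos_norm_le
  set δ : ℝ := min (1 / 2) (ε / (2 * (M + 1)))
  have hδ : 0 < δ := by positivity
  have hcoeff := eventually_forall_norm_coeff_map_sub_lt hφ F
    (ε := δ ^ F.natDegree / (F.natDegree + 1)) (by positivity)
  filter_upwards [hcoeff] with z hz t ht
  obtain ⟨s, hs, hts⟩ := exists_root_norm_sub_lt_mul_max (hF.map (φ z)) (hF.map (φ y))
    (by simp [hF.natDegree_map]) (IsAlgClosed.splits _) (by rwa [Polynomial.eval_map]) hδ
    (by simpa only [hF.natDegree_map, norm_sub_rev] using hz)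
  rw [Polynomial.eval_map] at hs
  -- The estimate `hts` is relative to the size of `t` itself, which `δ ≤ 1 / 2` allows to absorb.
  have hbound : max ‖t‖ 1 ≤ 2 * (M + 1) := by
    have hhalf : δ * max ‖t‖ 1 ≤ 1 / 2 * max ‖t‖ 1 := by gcongr; exact min_le_left _ _
    have htri := norm_sub_norm_le t s
    rcases max_cases ‖t‖ 1 with h | h <;> linarith [hroots s hs]
  refine hεU (Metric.mem_thickening_iff.mpr ⟨s, hs, ?_⟩)
  calc dist t s = ‖t - s‖ := dist_eq_norm t s
    _ < δ * max ‖t‖ 1 := hts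
    _ ≤ ε / (2 * (M + 1)) * (2 * (M + 1)) := by gcongr; exact min_le_right _ _
    _ = ε := div_mul_cancel₀ _ (by positivity)

end ContinuityOfRoots

section NhdsSet

theorem tendsto_nhdsSet_pi {α ι X : Type*} [Finite ι] [PseudoMetricSpace X] {l : Filter α}
    {u : α → ι → X} {A : ι → Set X} (hA : ∀ i, IsCompact (A i))
    (hu : ∀ i, Tendsto (fun a => u a i) l (𝓝ˢ (A i))) :
    Tendsto u l (𝓝ˢ (Set.univ.pi A)) := by
  have := Fintype.ofFinite ι
  rw [(Metric.hasBasis_nhdsSet_thickening (isCompact_univ_pi hA)).tendsto_right_iff]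
  intro ε hε
  have hthick : ∀ᶠ a in l, ∀ i, u a i ∈ Metric.thickening ε (A i) := eventually_all.mpr fun i =>
    (hu i).eventually_mem (Metric.isOpen_thickening.mem_nhdsSet.mpr
      (Metric.self_subset_thickening hε _))
  filter_upwards [hthick] with a ha
  choose s hs hdist using fun i => Metric.mem_thickening_iff.mp (ha i)
  exact Metric.mem_thickening_iff.mpr ⟨s, fun i _ => hs i, (dist_pi_lt_iff hε).mpr hdist⟩

theorem nhdsSet_inf_comap_nhds_le {X Y : Type*} [TopologicalSpace X] [TopologicalSpace Y]
    [T2Space Y] {A : Set X} (hA : IsCompact A) {h : X → Y} (hh : Continuous h) {x : X}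
    (hx : ∀ a ∈ A, h a = h x → a = x) : 𝓝ˢ A ⊓ comap h (𝓝 (h x)) ≤ 𝓝 x := by
  rw [hA.nhdsSet_inf_eq_biSup]
  refine iSup₂_le fun a ha => ?_
  by_cases hax : h a = h x
  · exact hx a ha hax ▸ inf_le_left
  · have hdisj : Disjoint (𝓝 a) (comap h (𝓝 (h x))) :=
      disjoint_comap_iff_map.mpr ((disjoint_nhds_nhds.mpr hax).mono_left hh.continuousAt)
    exact hdisj.eq_bot.trans_le bot_le

end NhdsSet

section FiniteProjection

variable {k σ τ : Type*} [Field k] {P : Ideal (MvPolynomial σ k)}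

/-- Evaluation of regular functions, i.e. elements of the coordinate ring `k[X] ⧸ P`, at a point of
the zero locus of `P`. -/
noncomputable def evalQuotient (x : zeroLocus k P) : (MvPolynomial σ k ⧸ P) →ₐ[k] k :=
  Ideal.Quotient.liftₐ P (aeval (x : σ → k)) x.2

theorem evalQuotient_mk (x : zeroLocus k P) (p : MvPolynomial σ k) :
    evalQuotient x (Ideal.Quotient.mk P p) = eval (x : σ → k) p := rfl

theorem exists_evalQuotient_eq (ψ : (MvPolynomial σ k ⧸ P) →ₐ[k] k) :
    ∃ x : zeroLocus k P, evalQuotient x = ψ := by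
  have haeval : aeval (fun i => ψ (Ideal.Quotient.mk P (X i))) =
      ψ.comp (Ideal.Quotient.mkₐ k P) := by ext i; simp
  refine ⟨⟨fun i => ψ (Ideal.Quotient.mk P (X i)), fun p hp => ?_⟩, ?_⟩
  · rw [haeval]
    simp [Ideal.Quotient.eq_zero_iff_mem.mpr hp]
  · exact Ideal.Quotient.algHom_ext _ haeval

/-- The polynomial map from the zero locus of `P` to affine space `τ → k` whose comorphism is `g`:
its `i`-th coordinate is the regular function `g (X i)`. -/
noncomputable def zeroLocusMap (g : MvPolynomial τ k →ₐ[k] MvPolynomial σ k ⧸ P)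
    (x : zeroLocus k P) : τ → k :=
  fun i => evalQuotient x (g (X i))

theorem evalQuotient_apply_eq_eval_zeroLocusMap (g : MvPolynomial τ k →ₐ[k] MvPolynomial σ k ⧸ P)
    (x : zeroLocus k P) (b : MvPolynomial τ k) :
    evalQuotient x (g b) = eval (zeroLocusMap g x) b := by
  have hcomp : (evalQuotient x).comp g = aeval (zeroLocusMap g x) := by
    ext i; simp [zeroLocusMap]
  exact DFunLike.congr_fun hcomp b

/-- The values taken by the regular function `a` on the fiber of `zeroLocusMap g` over `y`. -/
def fiberValues (g : MvPolynomial τ k →ₐ[k] MvPolynomial σ k ⧸ P) (a : MvPolynomial σ k ⧸ P)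
    (y : τ → k) : Set k :=
  {t | ∃ x : zeroLocus k P, zeroLocusMap g x = y ∧ evalQuotient x a = t}

theorem evalQuotient_mem_fiberValues (g : MvPolynomial τ k →ₐ[k] MvPolynomial σ k ⧸ P)
    (a : MvPolynomial σ k ⧸ P) (x : zeroLocus k P) :
    evalQuotient x a ∈ fiberValues g a (zeroLocusMap g x) := ⟨x, rfl, rfl⟩

variable [IsAlgClosed k] [P.IsPrime] {g : MvPolynomial τ k →ₐ[k] MvPolynomial σ k ⧸ P}

theorem exists_monic_forall_setOf_eval₂_eq_zero_eq_fiberValues (hinj : Function.Injective g)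
    (hint : g.IsIntegral) (a : MvPolynomial σ k ⧸ P) :
    ∃ F : Polynomial (MvPolynomial τ k), F.Monic ∧
      ∀ y, {t | F.eval₂ (eval y) t = 0} = fiberValues g a y := by
  let _ : Algebra (MvPolynomial τ k) (MvPolynomial σ k ⧸ P) := g.toRingHom.toAlgebra
  have : Algebra.IsIntegral (MvPolynomial τ k) (MvPolynomial σ k ⧸ P) := ⟨hint⟩
  have : FaithfulSMul (MvPolynomial τ k) (MvPolynomial σ k ⧸ P) :=
    (faithfulSMul_iff_algebraMap_injective _ _).mpr hinj
  refine ⟨minpoly _ a, minpoly.monic (hint a), fun y => Set.Subset.antisymm (fun t ht => ?_) ?_⟩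
  · obtain ⟨ψ, hψ, hψa⟩ := exists_ringHom_comp_algebraMap_eq_and_apply_eq ht
    have hψg (b : MvPolynomial τ k) : ψ (g b) = eval y b := DFunLike.congr_fun hψ b
    obtain ⟨x, hx⟩ := exists_evalQuotient_eq
      { ψ with commutes' c := by simpa using hψg (C c) }
    have hxψ (b) : evalQuotient x b = ψ b := DFunLike.congr_fun hx b
    exact ⟨x, funext fun i => by simp [zeroLocusMap, hxψ, hψg], (hxψ a).trans hψa⟩
  · rintro _ ⟨x, rfl, rfl⟩
    have hcomp : (evalQuotient x).toRingHom.comp (algebraMap (MvPolynomial τ k) _) =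
        eval (zeroLocusMap g x) :=
      RingHom.ext (evalQuotient_apply_eq_eval_zeroLocusMap g x)
    rw [← hcomp]
    exact (Polynomial.hom_eval₂ _ _ _ _).symm.trans
      ((congrArg (evalQuotient x) (minpoly.aeval (MvPolynomial τ k) a)).trans (map_zero _))

theorem finite_fiberValues (hinj : Function.Injective g) (hint : g.IsIntegral)
    (a : MvPolynomial σ k ⧸ P) (y : τ → k) : (fiberValues g a y).Finite := by
  obtain ⟨F, hF, hroots⟩ := exists_monic_forall_setOf_eval₂_eq_zero_eq_fiberValues hinj hint a
  exact hroots y ▸ finite_setOf_eval₂_eq_zero (eval y) hF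

end FiniteProjection

section Topology

theorem dense_setOf_eval_ne_zero {R σ : Type*} [CommRing R] [IsDomain R] [TopologicalSpace R]
    [T1Space R] [∀ r : R, (𝓝[≠] r).NeBot] {b : MvPolynomial σ R} (hb : b ≠ 0) :
    Dense {y | eval y b ≠ 0} := by
  refine fun y => mem_closure_iff_nhds.mpr fun U hU => ?_
  rw [nhds_pi, Filter.mem_pi] at hU
  obtain ⟨I, -, u, hu, huU⟩ := hU
  by_contra! hempty
  refine hb (MvPolynomial.funext_set u (fun i => infinite_of_mem_nhds (y i) (hu i)) fun z hz => ?_)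
  by_contra hzb
  exact hempty.le ⟨huU fun i _ => hz i trivial, by simpa using hzb⟩

variable {k σ : Type*} [Field k] [TopologicalSpace k] [IsTopologicalSemiring k]

theorem isClosed_zeroLocus [T1Space k] (I : Ideal (MvPolynomial σ k)) :
    IsClosed (zeroLocus k I) := by
  have hinter : zeroLocus k I = ⋂ p ∈ I, {x | eval x p = 0} := by
    ext; simp [mem_zeroLocus_iff, aeval_eq_eval]
  rw [hinter]
  exact isClosed_biInter fun p _ => isClosed_singleton.preimage (continuous_eval p)

theorem continuous_evalQuotient {P : Ideal (MvPolynomial σ k)} (a : MvPolynomial σ k ⧸ P) :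
    Continuous fun x : zeroLocus k P => evalQuotient x a := by
  obtain ⟨p, rfl⟩ := Ideal.Quotient.mk_surjective a
  exact (continuous_eval p).comp continuous_subtype_val

end Topology

section OpenProjection

variable {𝕜 σ τ : Type*} [NormedField 𝕜] {P : Ideal (MvPolynomial σ 𝕜)}

variable [IsAlgClosed 𝕜] [P.IsPrime] {g : MvPolynomial τ 𝕜 →ₐ[𝕜] MvPolynomial σ 𝕜 ⧸ P}

theorem tendsto_evalQuotient_nhdsSet_fiberValues (hinj : Function.Injective g)
    (hint : g.IsIntegral) (a : MvPolynomial σ 𝕜 ⧸ P) (y : τ → 𝕜) :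
    Tendsto (fun x => evalQuotient x a) (comap (zeroLocusMap g) (𝓝 y))
      (𝓝ˢ (fiberValues g a y)) := by
  obtain ⟨F, hF, hroots⟩ := exists_monic_forall_setOf_eval₂_eq_zero_eq_fiberValues hinj hint a
  refine fun U hU => mem_map.mpr ?_
  have hev := eventually_forall_root_mem (φ := eval) (fun r => (continuous_eval r).continuousAt)
    hF (hroots y ▸ hU)
  filter_upwards [hev.comap (zeroLocusMap g)] with x hx
  exact hx _ ((hroots _).ge (evalQuotient_mem_fiberValues g a x))

theorem eventually_exists_zeroLocusMap_eq_and_evalQuotient_mem (hinj : Function.Injective g)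
    (hint : g.IsIntegral) (a : MvPolynomial σ 𝕜 ⧸ P) (x : zeroLocus 𝕜 P) {U : Set 𝕜}
    (hU : U ∈ 𝓝 (evalQuotient x a)) :
    ∀ᶠ y in 𝓝 (zeroLocusMap g x), ∃ x', zeroLocusMap g x' = y ∧ evalQuotient x' a ∈ U := by
  obtain ⟨F, hF, hroots⟩ := exists_monic_forall_setOf_eval₂_eq_zero_eq_fiberValues hinj hint a
  have hx : F.eval₂ (eval (zeroLocusMap g x)) (evalQuotient x a) = 0 :=
    (hroots _).ge (evalQuotient_mem_fiberValues g a x)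
  have hev := eventually_exists_root_mem (φ := eval) (fun r => (continuous_eval r).continuousAt)
    hF hx hU
  filter_upwards [hev] with y ⟨t, htU, ht⟩
  obtain ⟨x', hx', rfl⟩ := (hroots y).le ht
  exact ⟨x', hx', htU⟩

variable [Finite σ]

-- Near the fiber through `x`, every coordinate is close to one of its finitely many values on that
-- fiber, so it is enough for `a` to separate `x` from the rest of the finite grid of such values.
theorem exists_comap_zeroLocusMap_inf_comap_evalQuotient_le_nhds (hinj : Function.Injective g)
    (hint : g.IsIntegral) (x : zeroLocus 𝕜 P) :
    ∃ a, comap (zeroLocusMap g) (𝓝 (zeroLocusMap g x)) ⊓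
      comap (evalQuotient · a) (𝓝 (evalQuotient x a)) ≤ 𝓝 x := by
  let A (i : σ) : Set 𝕜 := fiberValues g (Ideal.Quotient.mk P (X i)) (zeroLocusMap g x)
  have hA (i : σ) : (A i).Finite := finite_fiberValues hinj hint _ _
  have hgrid : (Set.univ.pi A).Finite := Set.Finite.pi hA
  have htendsto : Tendsto ((↑) : zeroLocus 𝕜 P → σ → 𝕜)
      (comap (zeroLocusMap g) (𝓝 (zeroLocusMap g x))) (𝓝ˢ (Set.univ.pi A)) :=
    tendsto_nhdsSet_pi (fun i => (hA i).isCompact) fun i => by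
      simpa [evalQuotient_mk] using
        tendsto_evalQuotient_nhdsSet_fiberValues hinj hint (Ideal.Quotient.mk P (X i)) _
  obtain ⟨h, hh, hhx⟩ := exists_eval_eq_zero_and_eval_ne_zero
    (hgrid.sdiff (t := {(x : σ → 𝕜)})) (x := x) (by simp)
  have hsep : ∀ y ∈ Set.univ.pi A, eval y h = eval (x : σ → 𝕜) h → y = x := fun y hy hyx => by
    by_contra hne
    exact hhx (hyx ▸ hh y ⟨hy, hne⟩)
  refine ⟨Ideal.Quotient.mk P h, ?_⟩
  calc comap (zeroLocusMap g) (𝓝 (zeroLocusMap g x)) ⊓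
        comap (fun x' : zeroLocus 𝕜 P => eval (x' : σ → 𝕜) h) (𝓝 (eval (x : σ → 𝕜) h))
      ≤ comap (↑) (𝓝ˢ (Set.univ.pi A) ⊓ comap (eval · h) (𝓝 (eval (x : σ → 𝕜) h))) := by
        rw [comap_inf, comap_comap]
        exact inf_le_inf_right _ htendsto.le_comap
    _ ≤ comap (↑) (𝓝 (x : σ → 𝕜)) :=
        comap_mono (nhdsSet_inf_comap_nhds_le hgrid.isCompact (continuous_eval h) hsep)
    _ = 𝓝 x := (nhds_subtype_eq_comap).symm

theorem isOpenMap_zeroLocusMap (hinj : Function.Injective g) (hint : g.IsIntegral) :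
    IsOpenMap (zeroLocusMap g) := by
  refine isOpenMap_iff_nhds_le.mpr fun x s hs => ?_
  obtain ⟨a, ha⟩ := exists_comap_zeroLocusMap_inf_comap_evalQuotient_le_nhds hinj hint x
  obtain ⟨V', ⟨V, hV, hVV'⟩, U', ⟨U, hU, hUU'⟩, hVU⟩ := mem_inf_iff.mp (ha hs)
  filter_upwards [hV, eventually_exists_zeroLocusMap_eq_and_evalQuotient_mem hinj hint a x hU]
  rintro _ hyV ⟨x', rfl, hx'U⟩
  exact hVU.ge ⟨hVV' hyV, hUU' hx'U⟩

end OpenProjection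

section Density

variable {𝕜 σ : Type*} [NontriviallyNormedField 𝕜] [IsAlgClosed 𝕜] [Finite σ]
  {P : Ideal (MvPolynomial σ 𝕜)} [P.IsPrime]

theorem dense_setOf_evalQuotient_ne_zero {a : MvPolynomial σ 𝕜 ⧸ P} (ha : a ≠ 0) :
    Dense {x : zeroLocus 𝕜 P | evalQuotient x a ≠ 0} := by
  obtain ⟨s, g, hinj, hint⟩ := exists_integral_inj_algHom_of_fg 𝕜 (MvPolynomial σ 𝕜 ⧸ P)
  obtain ⟨b, hb, c, hc⟩ : ∃ b ≠ 0, a ∣ g b := by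
    let _ : Algebra (MvPolynomial (Fin s) 𝕜) (MvPolynomial σ 𝕜 ⧸ P) := g.toRingHom.toAlgebra
    have halg : IsAlgebraic (MvPolynomial (Fin s) 𝕜) a := IsIntegral.isAlgebraic (hint a)
    exact halg.exists_nonzero_dvd (mem_nonZeroDivisors_of_ne_zero ha)
  refine ((dense_setOf_eval_ne_zero hb).preimage (isOpenMap_zeroLocusMap hinj hint)).mono
    fun x (hx : eval (zeroLocusMap g x) b ≠ 0) hxa => hx ?_
  rw [← evalQuotient_apply_eq_eval_zeroLocusMap, hc, map_mul, hxa, zero_mul]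

variable [CompleteSpace 𝕜] {ι : Type*} [Countable ι]

theorem dense_setOf_forall_evalQuotient_ne_zero {a : ι → MvPolynomial σ 𝕜 ⧸ P}
    (ha : ∀ j, a j ≠ 0) : Dense {x : zeroLocus 𝕜 P | ∀ j, evalQuotient x (a j) ≠ 0} := by
  have := (isClosed_zeroLocus P).completeSpace_coe
  rw [Set.ofPred_forall]
  exact dense_iInter_of_isOpen
    (fun j => isOpen_ne_fun (continuous_evalQuotient (a j)) continuous_const)
    fun j => dense_setOf_evalQuotient_ne_zero (ha j)

end Density

section Closure

variable {𝕜 σ ι : Type*} [NontriviallyNormedField 𝕜] [CompleteSpace 𝕜] [IsAlgClosed 𝕜] [Finite σ]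
  [Countable ι] {C : ι → Set (σ → 𝕜)}

theorem zeroLocus_subset_closure_iInter_of_mem_minimalPrimes (hC : ∀ j, ZariskiConstructible (C j))
    {P : Ideal (MvPolynomial σ 𝕜)} (hP : P ∈ (vanishingIdeal 𝕜 (⋂ j, C j)).minimalPrimes) :
    zeroLocus 𝕜 P ⊆ closure (⋂ j, C j) := by
  have : P.IsPrime := hP.1.1
  have hvan := vanishingIdeal_inter_zeroLocus_of_mem_minimalPrimes hP
  have hgeneric (j) : ∃ q ∉ P, ∀ x ∈ zeroLocus 𝕜 P, eval x q ≠ 0 → x ∈ C j := by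
    have := exists_zeroLocus_vanishingIdeal_sdiff_subset (hC j)
      (Set.inter_subset_left.trans (Set.iInter_subset C j)) (hvan.symm ▸ hP.1.1)
    rwa [hvan] at this
  choose q hqP hq using hgeneric
  have hdense := dense_setOf_forall_evalQuotient_ne_zero (a := fun j => Ideal.Quotient.mk P (q j))
    fun j => mt Ideal.Quotient.eq_zero_iff_mem.mp (hqP j)
  refine Subtype.dense_iff.mp hdense |>.trans (closure_mono ?_)
  rintro _ ⟨x, hx, rfl⟩
  exact Set.mem_iInter.mpr fun j => hq j x x.2 (hx j)

theorem closure_iInter_eq_zeroLocus_vanishingIdeal (hC : ∀ j, ZariskiConstructible (C j)) :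
    closure (⋂ j, C j) = zeroLocus 𝕜 (vanishingIdeal 𝕜 (⋂ j, C j)) := by
  refine (closure_minimal (zeroLocus_vanishingIdeal_le _) (isClosed_zeroLocus _)).antisymm
    fun x hx => ?_
  obtain ⟨P, hP, hxP⟩ := exists_minimalPrimes_mem_zeroLocus hx
  exact zeroLocus_subset_closure_iInter_of_mem_minimalPrimes hC hP hxP

theorem closure_iInter_constructible_is_algebraic_general (hC : ∀ j, ZariskiConstructible (C j)) :
    ∃ (s : ℕ) (q : Fin s → MvPolynomial σ 𝕜),
      closure (⋂ j, C j) = {x | ∀ i, eval x (q i) = 0} := by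
  rw [closure_iInter_eq_zeroLocus_vanishingIdeal hC]
  exact exists_fin_zeroLocus_eq _

end Closure

/-- Let `n ≥ 1` and let `(Cⱼ)` be a countable family of constructible subsets
of `ℂⁿ`. Then the closure of `⋂ⱼ Cⱼ` in the standard (Euclidean, i.e. product) topology on `ℂⁿ`
is an algebraic set: it is the common zero locus of finitely many polynomials. -/
theorem closure_iInter_constructible_is_algebraic
    (n : ℕ) (hn : 1 ≤ n) (C : ℕ → Set (Fin n → ℂ))
    (hcon : ∀ j, PolyConstructible (C j)) :
    ∃ (s : ℕ) (q : Fin s → MvPolynomial (Fin n) ℂ),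
      closure (⋂ j : ℕ, C j) = {x : Fin n → ℂ | ∀ i : Fin s, MvPolynomial.eval x (q i) = 0} :=
  closure_iInter_constructible_is_algebraic_general hcon
end

section
/- Let W be a nonempty Noetherian topological space, let X be an irreducible topological space, and let g : W → X be a continuous open map. Then every irreducible component C of W has dense image in X, i.e. the closure of g(C) equals X. -/
/-!
If the irreducible components of `W` form a locally finite family, as they do when `W` is
Noetherian, then a small open set meeting a component `C` meets only finitely many others; these
are closed and cannot cover the part of `C` in that open set, so `C` has nonempty interior. An open
map carries this interior to a nonempty open subset of `X`, which is dense because `X` is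
irreducible.
-/

section

variable {W X : Type*} [TopologicalSpace W] [TopologicalSpace X]

theorem interior_nonempty_of_finite_irreducibleComponents_inter {C V : Set W}
    (hC : C ∈ irreducibleComponents W) (hV : IsOpen V) (hCV : (C ∩ V).Nonempty)
    (hfin : {Z ∈ irreducibleComponents W | (Z ∩ V).Nonempty}.Finite) :
    (interior C).Nonempty := by
  set S := {Z ∈ irreducibleComponents W | (Z ∩ V).Nonempty} \ {C}
  have hS : S.Finite := hfin.sdiff
  have hS_comp : S ⊆ irreducibleComponents W := fun _ hZ ↦ hZ.1.1
  have hS_closed : IsClosed (⋃₀ S) := by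
    rw [Set.sUnion_eq_biUnion]
    exact hS.isClosed_biUnion fun Z hZ ↦ isClosed_of_mem_irreducibleComponents Z (hS_comp hZ)
  have hsub : V \ ⋃₀ S ⊆ C := by
    rintro y ⟨hyV, hyS⟩
    by_contra hyC
    refine hyS ⟨irreducibleComponent y, ⟨⟨irreducibleComponent_mem_irreducibleComponents y,
      y, mem_irreducibleComponent, hyV⟩, ?_⟩, mem_irreducibleComponent⟩
    rintro rfl
    exact hyC mem_irreducibleComponent
  have hnot_cover : ¬ C ∩ V ⊆ ⋃₀ S := fun hcover ↦
    have hC_cover : C ⊆ ⋃₀ S :=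
      (subset_closure_inter_of_isPreirreducible_of_isOpen hC.1.2 hV hCV).trans
        (closure_minimal hcover hS_closed)
    (mem_of_subset_sUnion_irreducibleComponents C hC S hS hS_comp hC_cover).2 rfl
  obtain ⟨y, ⟨-, hyV⟩, hyS⟩ := Set.not_subset.mp hnot_cover
  exact ⟨y, interior_maximal hsub (hV.sdiff hS_closed) ⟨hyV, hyS⟩⟩

theorem interior_nonempty_of_mem_irreducibleComponents {C : Set W}
    (hW : LocallyFinite ((↑) : irreducibleComponents W → Set W))
    (hC : C ∈ irreducibleComponents W) :
    (interior C).Nonempty := by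
  obtain ⟨x, hxC⟩ := hC.1.nonempty
  obtain ⟨V, ⟨hxV, hV⟩, hfin⟩ := hW.exists_mem_basis (nhds_basis_opens x)
  refine interior_nonempty_of_finite_irreducibleComponents_inter hC hV ⟨x, hxC, hxV⟩ ?_
  refine (hfin.image Subtype.val).subset ?_
  rintro Z ⟨hZ, hZV⟩
  exact ⟨⟨Z, hZ⟩, hZV, rfl⟩

theorem dense_image_of_isOpenMap_of_interior_nonempty [PreirreducibleSpace X] {g : W → X}
    (hopen : IsOpenMap g) {s : Set W} (hs : (interior s).Nonempty) :
    Dense (g '' s) :=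
  ((hopen _ isOpen_interior).dense (hs.image g)).mono (Set.image_mono interior_subset)

theorem component_dense_image_general [PreirreducibleSpace X]
    (hW : LocallyFinite ((↑) : irreducibleComponents W → Set W))
    (g : W → X) (hopen : IsOpenMap g) (C : Set W) (hC : C ∈ irreducibleComponents W) :
    closure (g '' C) = Set.univ :=
  (dense_image_of_isOpenMap_of_interior_nonempty hopen
    (interior_nonempty_of_mem_irreducibleComponents hW hC)).closure_eq

theorem locallyFinite_irreducibleComponents [TopologicalSpace.NoetherianSpace W] :
    LocallyFinite ((↑) : irreducibleComponents W → Set W) :=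
  have := (TopologicalSpace.NoetherianSpace.finite_irreducibleComponents (α := W)).to_subtype
  locallyFinite_of_finite _

end

/-- Let `W` be a nonempty Noetherian topological space, `X` an irreducible
topological space, and `g : W → X` a continuous open map. Then every irreducible component
`C` of `W` has dense image in `X`. -/
theorem component_dense_image
    (W X : Type*) [TopologicalSpace W] [TopologicalSpace X]
    [TopologicalSpace.NoetherianSpace W] [Nonempty W] [IrreducibleSpace X]
    (g : W → X) (hg : Continuous g) (hopen : IsOpenMap g)
    (C : Set W) (hC : C ∈ irreducibleComponents W) :
    closure (g '' C) = Set.univ :=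
  component_dense_image_general locallyFinite_irreducibleComponents g hopen C hC
end
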